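/- arXiv:1103.0565 — 3 statements merged into one kernel-verified Lean document; each statement's English description precedes it below -/
import Mathlib

section
/- Let S be a locally noetherian scheme, U a dense open of S, f : X → S a smooth morphism, and M a coherent O_X-module. If M is invertible over X_U, flat over S, and has no embedded components on the fibers of X/S (i.e. M ⊗ k(s) has no embedded associated points for every s ∈ S), then M is an invertible O_X-module. -/
set_option synthInstance.maxHeartbeats 400000

/-!
STATEMENT 0: Let `S` be a locally noetherian scheme, `U` a dense open of `S`,
`f : X → S` a smooth morphism and `M` a coherent `O_X`-module.  If `M` is invertible over
`X_U`, flat over `S`, and has no embedded components on the fibers of `X/S`, then `M` is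
an invertible `O_X`-module.

Affine formulation: `R` a noetherian commutative ring, `U ⊆ Spec R` a dense open,
`A` a smooth `R`-algebra (so that `Spec A → Spec R` is a smooth morphism of finite
presentation) and `M` a finitely generated `A`-module (a coherent sheaf on `Spec A`) which:
* is invertible over `X_U`: for every prime `P` of `A` lying over a point of `U`, the
  localization `M_P` is free of rank one over `A_P`;
* is flat over `R`;
* has no embedded components on the fibers: for every prime `p` of `R`, the set of
  associated primes of the fiber `M ⊗_R k(p)` contains no strict inclusion (every
  associated point of `M ⊗ k(p)` is a generic point of its support).
Conclusion: `M` is invertible, i.e. `M_P` is free of rank one over `A_P` for every prime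
`P` of `A`.
-/

open TensorProduct IsLocalRing

/-!
At a prime `P` of `A`, smoothness makes `M_P` a module of finite flat dimension over `A_P`, and
this survives base change to `R/q` for a prime `q ≤ p = P ∩ R` with `q ∈ U`. Choose `r ∉ q` with
`D(r) ⊆ U`. Then `M_P / q M_P` is invertible on `D(r)`, and also on `D(d)` for some `d ∉ p A_P`,
because it is free at the generic point of the fibre. Finite flat dimension makes its pullback to
an affine bundle over `D(r) ∪ D(d)` stably free of rank one, hence free. Units of a reduced ring
are constant along affine lines, so trivialisations on `D(r)` and `D(d)` can be chosen to agree on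
`D(rd)`. They glue to a linear form whose image contains powers of `r` and `d`. The absence of
embedded primes makes this form injective on the closed fibre, whence it is an isomorphism by the
local criterion of flatness; flatness over `R` lifts freeness from `R/q` back to `R`.
-/

namespace InvertibleOfFlat

universe u v w

section FlatDimension

open Polynomial

section ShortExact

variable {B K N M : Type*} [CommRing B] [AddCommGroup K] [AddCommGroup N] [AddCommGroup M]
  [Module B K] [Module B N] [Module B M] {i : K →ₗ[B] N} {f : N →ₗ[B] M}

theorem flat_left_of_shortExact (hi : Function.Injective i) (hex : Function.Exact i f)
    (hf : Function.Surjective f) [Module.Flat B N] [Module.Flat B M] : Module.Flat B K := by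
  rw [Module.Flat.iff_rTensor_preserves_injective_linearMap]
  intro P P' _ _ _ _ j hj
  have hiP := LinearMap.lTensor_injective_of_exact_of_flat f hf i hi hex P
  have hjN := Module.Flat.rTensor_preserves_injective_linearMap (M := N) j hj
  have comm : i.lTensor P' ∘ j.rTensor K = j.rTensor N ∘ i.lTensor P := by
    rw [← LinearMap.coe_comp, ← LinearMap.coe_comp, LinearMap.lTensor_comp_rTensor,
      LinearMap.rTensor_comp_lTensor]
  exact Function.Injective.of_comp (f := i.lTensor P') (comm ▸ hjN.comp hiP)

theorem flat_middle_of_shortExact (hi : Function.Injective i) (hex : Function.Exact i f)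
    (hf : Function.Surjective f) [Module.Flat B K] [Module.Flat B M] : Module.Flat B N := by
  rw [Module.Flat.iff_rTensor_preserves_injective_linearMap]
  intro P P' _ _ _ _ j hj
  have hiP' := LinearMap.lTensor_injective_of_exact_of_flat f hf i hi hex P'
  have hjK := Module.Flat.rTensor_preserves_injective_linearMap (M := K) j hj
  have hjM := Module.Flat.rTensor_preserves_injective_linearMap (M := M) j hj
  have comm_f (x) : f.lTensor P' (j.rTensor N x) = j.rTensor M (f.lTensor P x) := by
    rw [← LinearMap.comp_apply, ← LinearMap.comp_apply, LinearMap.lTensor_comp_rTensor,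
      LinearMap.rTensor_comp_lTensor]
  have comm_i (x) : i.lTensor P' (j.rTensor K x) = j.rTensor N (i.lTensor P x) := by
    rw [← LinearMap.comp_apply, ← LinearMap.comp_apply, LinearMap.lTensor_comp_rTensor,
      LinearMap.rTensor_comp_lTensor]
  rw [injective_iff_map_eq_zero]
  intro x hx
  have hfx : f.lTensor P x = 0 := hjM (by rw [← comm_f, hx, map_zero, map_zero])
  obtain ⟨y, rfl⟩ := (lTensor_exact P hex hf x).1 hfx
  have hy : j.rTensor K y = 0 := hiP' (by rw [comm_i, hx, map_zero])
  rw [hjK (hy.trans (map_zero _).symm), map_zero]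

variable {K' F' : Type*} [AddCommGroup K'] [AddCommGroup F'] [Module B K'] [Module B F']
  {i' : K' →ₗ[B] F'} {f' : F' →ₗ[B] M}

theorem flat_pullback (hi' : Function.Injective i') (hex' : Function.Exact i' f')
    (hf' : Function.Surjective f') [Module.Flat B N] [Module.Flat B K'] :
    Module.Flat B (LinearMap.eqLocus (f ∘ₗ .fst B N F') (f' ∘ₗ .snd B N F')) := by
  set G := LinearMap.eqLocus (f ∘ₗ .fst B N F') (f' ∘ₗ .snd B N F')
  let j : K' →ₗ[B] G := (LinearMap.prod 0 i').codRestrict G fun x => by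
    simpa [G] using (hex'.apply_apply_eq_zero x).symm
  refine flat_middle_of_shortExact (i := j) (f := .fst B N F' ∘ₗ G.subtype)
    (fun a b hab => hi' (congrArg (fun z : G => z.1.2) hab)) ?_ fun a => ?_
  · rintro ⟨⟨a, e⟩, h : f a = f' e⟩
    refine ⟨fun ha : a = 0 => ?_, ?_⟩
    · subst ha
      obtain ⟨y, hy⟩ := (hex' e).1 (by rw [← h, map_zero])
      exact ⟨y, Subtype.ext (Prod.ext rfl hy)⟩
    · rintro ⟨y, hy⟩
      exact (congrArg (fun z : G => z.1.1) hy).symm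
  · obtain ⟨e, he⟩ := hf' (f a)
    exact ⟨⟨(a, e), he.symm⟩, rfl⟩

/- Schanuel's argument: the pullback of `N` and `F'` over `M` is an extension of `N` by `K'`
and of `F'` by `K`. -/
theorem flat_syzygy_of_flat_syzygy (hi : Function.Injective i) (hex : Function.Exact i f)
    (hf : Function.Surjective f) (hi' : Function.Injective i') (hex' : Function.Exact i' f')
    (hf' : Function.Surjective f') [Module.Flat B N] [Module.Flat B F'] [Module.Flat B K'] :
    Module.Flat B K := by
  have := flat_pullback (f := f) hi' hex' hf'
  set G := LinearMap.eqLocus (f ∘ₗ .fst B N F') (f' ∘ₗ .snd B N F')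
  let j : K →ₗ[B] G := (LinearMap.prod i 0).codRestrict G fun x => by
    simpa [G] using hex.apply_apply_eq_zero x
  refine flat_left_of_shortExact (i := j) (f := .snd B N F' ∘ₗ G.subtype)
    (fun a b hab => hi (congrArg (fun z : G => z.1.1) hab)) ?_ fun e => ?_
  · rintro ⟨⟨a, e⟩, h : f a = f' e⟩
    refine ⟨fun he : e = 0 => ?_, ?_⟩
    · subst he
      obtain ⟨y, hy⟩ := (hex a).1 (by rw [h, map_zero])
      exact ⟨y, Subtype.ext (Prod.ext hy rfl)⟩
    · rintro ⟨y, hy⟩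
      exact (congrArg (fun z : G => z.1.2) hy).symm
  · obtain ⟨a, ha⟩ := hf (f' e)
    exact ⟨⟨(a, e), ha⟩, rfl⟩

end ShortExact

/-- `HasFlatDimLE B n M`: the `B`-module `M` has flat dimension at most `n`. The definition asks
that every syzygy of `M` with respect to a flat cover has flat dimension at most `n - 1`, which
makes the behaviour under change of rings immediate; all modules live in the universe of `M`. -/
def HasFlatDimLE (B : Type u) [CommRing B] :
    ℕ → ∀ (M : Type w) [AddCommGroup M] [Module B M], Prop
  | 0, M, _, _ => Module.Flat B M
  | n + 1, M, _, _ =>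
    ∀ (K F : Type w) [AddCommGroup K] [AddCommGroup F] [Module B K] [Module B F]
      (i : K →ₗ[B] F) (f : F →ₗ[B] M), Function.Injective i → Function.Exact i f →
      Function.Surjective f → Module.Flat B F → HasFlatDimLE B n K

theorem isScalarTower_compHom (B : Type u) {L : Type v} [CommRing B] [CommRing L] [Algebra B L]
    (M : Type w) [AddCommGroup M] [Module L M] :
    letI := Module.compHom M (algebraMap B L)
    IsScalarTower B L M :=
  letI := Module.compHom M (algebraMap B L)
  .of_algebraMap_smul fun _ _ => rfl

theorem HasFlatDimLE.of_formallyUnramified {B : Type u} {L : Type v} [CommRing B] [CommRing L]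
    [Algebra B L] [Module.Flat B L] [Algebra.FormallyUnramified B L] [Algebra.EssFiniteType B L]
    {n : ℕ} {M : Type w} [AddCommGroup M] [Module L M] [Module B M] [IsScalarTower B L M]
    (h : HasFlatDimLE B n M) : HasFlatDimLE L n M := by
  induction n generalizing M with
  | zero =>
    have : Module.Flat B M := h
    exact Algebra.FormallyUnramified.flat_of_restrictScalars B L M
  | succ n ih =>
    intro K F _ _ _ _ i f hi hex hf _
    let _ := Module.compHom K (algebraMap B L)
    let _ := Module.compHom F (algebraMap B L)
    have := isScalarTower_compHom B (L := L) K
    have := isScalarTower_compHom B (L := L) F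
    exact ih (h K F (i.restrictScalars B) (f.restrictScalars B) hi hex hf (.trans B L F))

theorem HasFlatDimLE.of_bijective_algebraMap {B : Type u} {L : Type v} [CommRing B] [CommRing L]
    [Algebra B L] (hBL : Function.Bijective (algebraMap B L)) {n : ℕ} {M : Type w}
    [AddCommGroup M] [Module L M] [Module B M] [IsScalarTower B L M] (h : HasFlatDimLE B n M) :
    HasFlatDimLE L n M := by
  have : Module.Flat B L := .of_linearEquiv
    (LinearEquiv.ofBijective (Algebra.linearMap B L) hBL).symm
  have : Algebra.FormallyUnramified B L := .of_surjective (Algebra.ofId B L) hBL.2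
  have : Algebra.FiniteType B L := .of_surjective (Algebra.ofId B L) hBL.2
  exact h.of_formallyUnramified

section PolynomialRing

variable (S : Type u) (M : Type w) [CommRing S] [AddCommGroup M] [Module S M] [Module S[X] M]
  [IsScalarTower S S[X] M]

/-- The action map `S[X] ⊗ M → M` of an `S[X]`-module `M`. -/
noncomputable def polyAction : S[X] ⊗[S] M →ₗ[S[X]] M :=
  AlgebraTensorModule.lift ((LinearMap.lsmul S[X] M).restrictScalars₁₂ S[X] S)

/-- The map `X ⊗ 1 - 1 ⊗ X` on `S[X] ⊗ M`, whose image is the kernel of `polyAction`. -/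
noncomputable def polyRelation : S[X] ⊗[S] M →ₗ[S[X]] S[X] ⊗[S] M :=
  LinearMap.lsmul S[X] _ X -
    AlgebraTensorModule.lTensor S[X] S[X] ((LinearMap.lsmul S[X] M X).restrictScalars S)

variable {S M}

@[simp]
theorem polyAction_tmul (p : S[X]) (m : M) : polyAction S M (p ⊗ₜ m) = p • m := rfl

@[simp]
theorem polyRelation_tmul (p : S[X]) (m : M) :
    polyRelation S M (p ⊗ₜ m) = (X * p) ⊗ₜ m - p ⊗ₜ ((X : S[X]) • m) := by
  simp [polyRelation, TensorProduct.smul_tmul']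

theorem polyAction_surjective : Function.Surjective (polyAction S M) :=
  fun m => ⟨1 ⊗ₜ m, one_smul _ m⟩

open PolynomialModule in
theorem coeff_polyRelation (e : S[X] ⊗[S] M) (k : ℕ) :
    (polynomialTensorProductLEquivPolynomialModule S M (polyRelation S M e)).coeff (k + 1) =
      (polynomialTensorProductLEquivPolynomialModule S M e).coeff k -
        (X : S[X]) • (polynomialTensorProductLEquivPolynomialModule S M e).coeff (k + 1) := by
  have coeff_tmul (p : S[X]) (m : M) (k : ℕ) :
      (polynomialTensorProductLEquivPolynomialModule S M (p ⊗ₜ m)).coeff k = p.coeff k • m := by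
    simp [polynomialTensorProductLEquivPolynomialModule, lsingle, smul_single_apply]
  have coeff_sub (x y : PolynomialModule S M) : (x - y).coeff = x.coeff - y.coeff :=
    map_sub (coeffLinearEquiv S S) x y
  induction e with
  | zero => simp
  | tmul p m =>
    rw [polyRelation_tmul, map_sub, coeff_sub]
    simp [coeff_tmul, coeff_X_mul, smul_comm (X : S[X])]
  | add x y hx hy => simp [hx, hy]; abel

open PolynomialModule in
theorem polyRelation_injective : Function.Injective (polyRelation S M) := by
  rw [injective_iff_map_eq_zero]
  intro e he
  let c := (polynomialTensorProductLEquivPolynomialModule S M e).coeff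
  have descend (k) : c k = (X : S[X]) • c (k + 1) := by
    have hk := coeff_polyRelation e k
    rw [he, map_zero] at hk
    exact sub_eq_zero.1 hk.symm
  obtain ⟨N, hN⟩ := c.support.bddAbove
  have vanish (j k : ℕ) (h : N < k + j) : c k = 0 := by
    induction j generalizing k with
    | zero => exact Finsupp.notMem_support_iff.1 fun hk => h.not_ge (hN hk)
    | succ j ih => rw [descend, ih (k + 1) (by omega), smul_zero]
  have hc : c = 0 := Finsupp.ext fun k => vanish (N + 1) k (by omega)
  exact (polynomialTensorProductLEquivPolynomialModule S M).map_eq_zero_iff.1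
    (coeff_eq_zero.1 hc)

theorem sub_one_tmul_polyAction_mem_range (e : S[X] ⊗[S] M) :
    e - (1 : S[X]) ⊗ₜ[S] polyAction S M e ∈ LinearMap.range (polyRelation S M) := by
  induction e with
  | zero => simp
  | add x y hx hy =>
    rw [map_add, tmul_add, add_sub_add_comm]
    exact add_mem hx hy
  | tmul p m =>
    induction p using Polynomial.induction_on' with
    | add p q hp hq =>
      rw [add_tmul, map_add, tmul_add, add_sub_add_comm]
      exact add_mem hp hq
    | monomial n a =>
      rw [← Polynomial.smul_X_eq_monomial, polyAction_tmul]
      induction n generalizing m with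
      | zero => simp [TensorProduct.smul_tmul]
      | succ n ih =>
        have step : polyRelation S M ((a • X ^ n : S[X]) ⊗ₜ m) ∈ LinearMap.range _ := ⟨_, rfl⟩
        rw [polyRelation_tmul] at step
        convert add_mem step (ih ((X : S[X]) • m)) using 1
        rw [sub_add_sub_cancel, smul_smul (M := S[X]) (α := M)]
        simp [pow_succ, mul_comm X]

theorem polyRelation_exact : Function.Exact (polyRelation S M) (polyAction S M) := by
  refine fun e => ⟨fun h => ?_, ?_⟩
  · simpa [h] using sub_one_tmul_polyAction_mem_range e
  · rintro ⟨e, rfl⟩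
    induction e with
    | zero => simp
    | tmul p m => simp [smul_smul, mul_comm]
    | add x y hx hy => rw [map_add, map_add, hx, hy, add_zero]

theorem HasFlatDimLE.polynomial {n : ℕ} (h : HasFlatDimLE S n M) :
    HasFlatDimLE S[X] (n + 1) M := by
  induction n generalizing M with
  | zero =>
    have : Module.Flat S M := h
    intro K F _ _ _ _ i f hi hex hf _
    exact flat_syzygy_of_flat_syzygy hi hex hf polyRelation_injective polyRelation_exact
      polyAction_surjective
  | succ n ih =>
    intro K F _ _ _ _ i f hi hex hf _
    let _ := Module.compHom K (algebraMap S S[X])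
    let _ := Module.compHom F (algebraMap S S[X])
    have := isScalarTower_compHom S (L := S[X]) K
    have := isScalarTower_compHom S (L := S[X]) F
    exact ih (h K F (i.restrictScalars S) (f.restrictScalars S) hi hex hf (.trans S S[X] F))

end PolynomialRing

theorem hasFlatDimLE_mvPolynomial (R : Type u) [CommRing R] (n : ℕ) (M : Type w)
    [AddCommGroup M] [Module R M] [Module (MvPolynomial (Fin n) R) M]
    [IsScalarTower R (MvPolynomial (Fin n) R) M] [Module.Flat R M] :
    HasFlatDimLE (MvPolynomial (Fin n) R) n M := by
  induction n generalizing M with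
  | zero =>
    have h : HasFlatDimLE R 0 M := ‹Module.Flat R M›
    exact h.of_bijective_algebraMap
      ⟨MvPolynomial.C_injective _ _, MvPolynomial.C_surjective _⟩
  | succ n ih =>
    let S := MvPolynomial (Fin n) R
    let e := MvPolynomial.finSuccEquiv R n
    let _ : Algebra S[X] (MvPolynomial (Fin (n + 1)) R) := e.symm.toRingHom.toAlgebra
    let _ : Module S[X] M := Module.compHom M (algebraMap S[X] (MvPolynomial (Fin (n + 1)) R))
    let _ : Module S M := Module.compHom M (algebraMap S S[X])
    have := isScalarTower_compHom S[X] (L := MvPolynomial (Fin (n + 1)) R) M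
    have := isScalarTower_compHom S (L := S[X]) M
    have : IsScalarTower R S M := .of_algebraMap_smul fun r x => by
      change e.symm (algebraMap R S[X] r) • x = r • x
      rw [e.symm.commutes, algebraMap_smul]
    exact (ih M).polynomial.of_bijective_algebraMap e.symm.bijective

end FlatDimension

section EssentiallyEtale

/-- `L` is a localization of an étale `B`-algebra. Localizations of smooth algebras are of this
form over a polynomial ring, which is how smoothness enters. -/
def IsEssEtale (B : Type u) (L : Type v) [CommRing B] [CommRing L] [Algebra B L] : Prop :=
  ∃ (E : Type v) (_ : CommRing E) (_ : Algebra B E) (_ : Algebra E L) (W : Submonoid E),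
    IsScalarTower B E L ∧ Algebra.Etale B E ∧ IsLocalization W L

namespace IsEssEtale

variable {B : Type u} {L : Type v} [CommRing B] [CommRing L] [Algebra B L]

theorem flat (h : IsEssEtale B L) : Module.Flat B L := by
  obtain ⟨E, _, _, _, W, _, _, _⟩ := h
  have : Module.Flat E L := IsLocalization.flat L W
  exact .trans B E L

theorem formallyUnramified (h : IsEssEtale B L) : Algebra.FormallyUnramified B L := by
  obtain ⟨E, _, _, _, W, _, _, _⟩ := h
  have : Algebra.FormallyUnramified E L := .of_isLocalization W
  exact .comp B E L

theorem essFiniteType (h : IsEssEtale B L) : Algebra.EssFiniteType B L := by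
  obtain ⟨E, _, _, _, W, _, _, _⟩ := h
  have : Algebra.EssFiniteType E L := .of_isLocalization L W
  exact .comp B E L

theorem bijective_toIntegralClosure (h : IsEssEtale B L) (K : Type w) [CommRing K] [Algebra B K] :
    Function.Bijective (TensorProduct.toIntegralClosure B L K) := by
  obtain ⟨E, _, _, _, W, _, _, _⟩ := h
  exact TensorProduct.toIntegralClosure_bijective_of_tower (S := E)
    TensorProduct.toIntegralClosure_bijective_of_smooth
    (TensorProduct.toIntegralClosure_bijective_of_isLocalization W)

end IsEssEtale

variable (R : Type u) {A : Type v} {L : Type v} [CommRing R] [CommRing A] [Algebra R A]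
  [Algebra.Smooth R A] (P : Ideal A) [P.IsPrime] [CommRing L] [Algebra A L] [Algebra R L]
  [IsScalarTower R A L] [IsLocalization.AtPrime L P]

include A P in
theorem exists_isEssEtale_mvPolynomial :
    ∃ (n : ℕ) (_ : Algebra (MvPolynomial (Fin n) R) L),
      IsScalarTower R (MvPolynomial (Fin n) R) L ∧ IsEssEtale (MvPolynomial (Fin n) R) L := by
  obtain ⟨f, hf, n, _, _, _⟩ :=
    Algebra.IsSmoothAt.exists_isStandardEtale_mvPolynomial (R := R) (S := A) (p := P)
  have hle : Submonoid.powers f ≤ P.primeCompl := Submonoid.powers_le.2 hf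
  let S := MvPolynomial (Fin n) R
  let E := Localization.Away f
  let _ : Algebra E L := IsLocalization.localizationAlgebraOfSubmonoidLe _ _ _ _ hle
  have : IsScalarTower A E L :=
    IsLocalization.localization_isScalarTower_of_submonoid_le _ _ _ _ hle
  let _ : Algebra S L := ((algebraMap E L).comp (algebraMap S E)).toAlgebra
  have : IsScalarTower S E L := .of_algebraMap_eq' rfl
  have : IsScalarTower R E L := .to₁₃₄ R A E L
  exact ⟨n, inferInstance, .to₁₂₄ R S E L, E, inferInstance, inferInstance, inferInstance, _,
    inferInstance, inferInstance, IsLocalization.isLocalization_of_submonoid_le E L _ _ hle⟩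

include A P in
theorem exists_hasFlatDimLE (M : Type w) [AddCommGroup M] [Module L M] [Module R M]
    [IsScalarTower R L M] [Module.Flat R M] : ∃ n, HasFlatDimLE L n M := by
  obtain ⟨n, _, _, hL⟩ := exists_isEssEtale_mvPolynomial R P (L := L)
  have := hL.flat
  have := hL.formallyUnramified
  have := hL.essFiniteType
  let _ := Module.compHom M (algebraMap (MvPolynomial (Fin n) R) L)
  have := isScalarTower_compHom (MvPolynomial (Fin n) R) (L := L) M
  have : IsScalarTower R (MvPolynomial (Fin n) R) M := .to₁₂₄ R _ L M
  exact ⟨n, (hasFlatDimLE_mvPolynomial R n M).of_formallyUnramified⟩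

end EssentiallyEtale

section SmoothOverField

theorem isField_of_trivial_idempotents (E : Type*) [CommRing E] [Nontrivial E] [IsArtinianRing E]
    [IsReduced E] (h : ∀ e : E, IsIdempotentElem e → e = 0 ∨ e = 1) : IsField E := by
  have eq_univ (x : PrimeSpectrum E) : ({x} : Set (PrimeSpectrum E)) = Set.univ := by
    obtain ⟨e, he, hx⟩ := PrimeSpectrum.exists_idempotent_basicOpen_eq_of_isClopen
      (isClopen_discrete {x})
    rcases h e he with rfl | rfl
    · simp at hx
    · simpa using hx
  have : Subsingleton (PrimeSpectrum E) :=
    ⟨fun x y => ((eq_univ x).symm ▸ Set.mem_univ y : y ∈ ({x} : Set _)).symm⟩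
  exact PrimeSpectrum.subsingleton_iff_isField_of_isReduced.1 this

theorem isIntegral_of_isIdempotentElem (L : Type*) {E : Type*} [CommRing L] [CommRing E]
    [Algebra L E] {e : E} (he : IsIdempotentElem e) : IsIntegral L e :=
  ⟨Polynomial.X * (Polynomial.X - 1),
    Polynomial.monic_X.mul (by simpa using Polynomial.monic_X_sub_C (1 : L)),
    by simp [mul_sub, he.eq]⟩

theorem isIdempotentElem_eq_zero_or_one {L : Type*} [CommRing L] [IsLocalRing L] {e : L}
    (he : IsIdempotentElem e) : e = 0 ∨ e = 1 := by
  rcases IsLocalRing.isUnit_or_isUnit_one_sub_self e with h | h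
  · exact .inr (h.mul_left_cancel (by rw [he.eq, mul_one]))
  · exact .inl (h.mul_left_cancel (by rw [he.one_sub_mul_self, mul_zero]))

variable {S K L : Type*} [CommRing S] [CommRing L] [Algebra S L]

theorem IsEssEtale.isIntegrallyClosedIn_tensorProduct [CommRing K] [Algebra S K]
    [IsIntegrallyClosedIn S K] (h : IsEssEtale S L) : IsIntegrallyClosedIn L (L ⊗[S] K) := by
  have := h.flat
  refine isIntegrallyClosedIn_iff.2 ⟨Algebra.TensorProduct.includeLeft_injective (S := S)
    (isIntegrallyClosedIn_iff.1 ‹_›).1, fun {e} he => ?_⟩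
  obtain ⟨z, hz⟩ := (h.bijective_toIntegralClosure K).2 ⟨e, he⟩
  obtain rfl : Algebra.TensorProduct.map (.id L L) (integralClosure S K).val z = e :=
    congrArg Subtype.val hz
  clear he hz
  induction z with
  | zero => exact ⟨0, by simp⟩
  | add x y hx hy =>
    obtain ⟨a, ha⟩ := hx
    obtain ⟨b, hb⟩ := hy
    exact ⟨a + b, by rw [map_add, map_add, ha, hb]⟩
  | tmul l x =>
    obtain ⟨a, ha⟩ := IsIntegrallyClosedIn.isIntegral_iff.1 x.2
    refine ⟨a • l, ?_⟩
    change (a • l) ⊗ₜ[S] (1 : K) = l ⊗ₜ[S] (x : K)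
    rw [← ha, Algebra.algebraMap_eq_smul_one, TensorProduct.smul_tmul]

theorem IsEssEtale.isDomain [IsDomain S] [IsIntegrallyClosed S] [IsLocalRing L]
    (h : IsEssEtale S L) : IsDomain L := by
  let K := FractionRing S
  have := h.flat
  have := h.formallyUnramified
  have := h.essFiniteType
  let E := L ⊗[S] K
  let _ : Algebra K E := Algebra.TensorProduct.rightAlgebra
  let toE : K ⊗[S] L ≃ₐ[K] E := Algebra.TensorProduct.commRight S K L
  have : IsIntegrallyClosedIn L E := h.isIntegrallyClosedIn_tensorProduct
  have hinj : Function.Injective (algebraMap L E) := (isIntegrallyClosedIn_iff.1 this).1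
  have : Nontrivial E := hinj.nontrivial
  have : Algebra.FormallyUnramified K E := .of_equiv toE
  have : Algebra.EssFiniteType K E := (Algebra.EssFiniteType.iff_of_algEquiv toE).1 inferInstance
  have : Module.Finite K E := Algebra.FormallyUnramified.finite_of_free K E
  have : IsReduced E := Algebra.FormallyUnramified.isReduced_of_field K E
  have : IsArtinianRing E := .of_finite K E
  suffices IsField E from have := this.isDomain; hinj.isDomain (algebraMap L E)
  refine isField_of_trivial_idempotents E fun e he => ?_
  obtain ⟨l, rfl⟩ := IsIntegrallyClosedIn.isIntegral_iff.1 (isIntegral_of_isIdempotentElem L he)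
  rcases isIdempotentElem_eq_zero_or_one (hinj (by simpa using he.eq) : l * l = l) with rfl | rfl
  · exact .inl (map_zero _)
  · exact .inr (map_one _)

variable (k : Type u) (A : Type v) [Field k] [CommRing A] [Algebra k A] [Algebra.Smooth k A]

include k in
theorem isDomain_of_smooth_field (P : Ideal A) [P.IsPrime] (L : Type v) [CommRing L] [Algebra A L]
    [IsLocalization.AtPrime L P] : IsDomain L := by
  let _ : Algebra k L := ((algebraMap A L).comp (algebraMap k A)).toAlgebra
  have : IsScalarTower k A L := .of_algebraMap_eq' rfl
  have : IsLocalRing L := IsLocalization.AtPrime.isLocalRing L P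
  obtain ⟨n, _, _, h⟩ := exists_isEssEtale_mvPolynomial k P (L := L)
  exact h.isDomain

include k in
theorem isReduced_of_smooth_field : IsReduced A := by
  refine isReduced_ofLocalizationMaximal A fun P hP => ?_
  have := isDomain_of_smooth_field k A P (Localization.AtPrime P)
  infer_instance

end SmoothOverField

section StablyFree

theorem isStablyFree_of_prod (B : Type*) {K M : Type*} [CommRing B] [AddCommGroup K]
    [AddCommGroup M] [Module B K] [Module B M] [Module.Free B (K × M)] [Module.Finite B (K × M)]
    [Module.IsStablyFree B K] : Module.IsStablyFree B M := by
  have : Module.Finite B K := .of_surjective (.fst B K M) Prod.fst_surjective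
  obtain ⟨N, _, _, _, _, _⟩ := Module.IsStablyFree.exist_free_prod B K
  have : Module.Free B (M × (K × N)) := .of_equiv
    (((LinearEquiv.prodComm B K M).prodCongr (.refl B N)).trans (.prodAssoc B M K N))
  exact .of_free_prod B M (K × N)

theorem HasFlatDimLE.isStablyFree_tensorProduct {B : Type u} {C : Type v} [CommRing B]
    [IsLocalRing B] [IsNoetherianRing B] [Small.{w} B] [CommRing C] [Algebra B C]
    [Module.Flat B C] {n : ℕ} {M : Type w} [AddCommGroup M] [Module B M] [Module.Finite B M]
    (h : HasFlatDimLE B n M) [Module.Projective C (C ⊗[B] M)] :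
    Module.IsStablyFree C (C ⊗[B] M) := by
  induction n generalizing M with
  | zero =>
    have : Module.Flat B M := h
    have : Module.Free B M := Module.free_of_flat_of_isLocalRing
    infer_instance
  | succ n ih =>
    obtain ⟨k, f₀, hf₀⟩ := Module.Finite.exists_fin' B M
    let F := Shrink.{w} (Fin k → B)
    let e : F ≃ₗ[B] (Fin k → B) := Shrink.linearEquiv B _
    have : Module.Free B F := .of_equiv e.symm
    have : Module.Finite B F := .equiv e.symm
    let f : F →ₗ[B] M := f₀ ∘ₗ e
    have hf : Function.Surjective f := hf₀.comp e.surjective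
    let i := (LinearMap.ker f).subtype
    have hi : Function.Injective i := Submodule.subtype_injective _
    have hex : Function.Exact i f := LinearMap.exact_subtype_ker_map f
    have hiC : Function.Injective (i.baseChange C) :=
      Module.Flat.lTensor_preserves_injective_linearMap i hi
    have hexC : Function.Exact (i.baseChange C) (f.baseChange C) := lTensor_exact C hex hf
    obtain ⟨s, hs⟩ := Module.projective_lifting_property (f.baseChange C) LinearMap.id
      (LinearMap.lTensor_surjective C hf)
    obtain ⟨split, -⟩ := hexC.splitSurjectiveEquiv hiC ⟨s, hs⟩
    have : Module.Free C ((C ⊗[B] LinearMap.ker f) × (C ⊗[B] M)) := .of_equiv split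
    have : Module.Finite C ((C ⊗[B] LinearMap.ker f) × (C ⊗[B] M)) := .equiv split
    have : Module.Projective C (C ⊗[B] LinearMap.ker f) :=
      .of_split (.inl C _ (C ⊗[B] M)) (.fst C _ _) rfl
    have := ih (h _ F i f hi hex hf inferInstance)
    exact isStablyFree_of_prod C (K := C ⊗[B] LinearMap.ker f)

theorem HasFlatDimLE.nonempty_linearEquiv_tensorProduct {B : Type u} {C : Type v} [CommRing B]
    [IsLocalRing B] [IsNoetherianRing B] [Small.{w} B] [CommRing C] [Algebra B C]
    [Module.Flat B C] {n : ℕ} {M : Type w} [AddCommGroup M] [Module B M] [Module.Finite B M]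
    (h : HasFlatDimLE B n M) [Module.Invertible C (C ⊗[B] M)] :
    Nonempty (C ⊗[B] M ≃ₗ[C] C) := by
  have := h.isStablyFree_tensorProduct (C := C)
  exact Module.Invertible.free_iff_linearEquiv.1
    (Module.free_of_isStablyFree_of_invertible C (C ⊗[B] M))

end StablyFree

section LocallyInvertible

theorem nonempty_linearEquiv_of_isLocalRing (B N : Type*) [CommRing B] [IsLocalRing B]
    [AddCommGroup N] [Module B N] [Module.Invertible B N] : Nonempty (N ≃ₗ[B] B) :=
  Module.Invertible.free_iff_linearEquiv.1 inferInstance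

variable {B N : Type*} [CommRing B] [AddCommGroup N] [Module B N]

theorem invertible_of_apply_smul_comm (hcomm : ∀ (f : Module.Dual B N) (x y : N), f x • y = f y • x)
    (hsurj : Function.Surjective (contractLeft B N)) : Module.Invertible B N := by
  have contract_smul_comm (t u : Module.Dual B N ⊗[B] N) :
      contractLeft B N u • t = contractLeft B N t • u := by
    induction t with
    | zero => simp
    | add t t' ht ht' => rw [smul_add, ht, ht', map_add, add_smul]
    | tmul g m =>
      induction u with
      | zero => simp
      | add u u' hu hu' => rw [smul_add, ← hu, ← hu', map_add, add_smul]
      | tmul f n =>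
        have hfg : f m • g = g m • f := by
          ext x
          calc f m * g x = g (f m • x) := by rw [map_smul, smul_eq_mul]
            _ = g (f x • m) := by rw [hcomm]
            _ = g m * f x := by rw [map_smul, smul_eq_mul, mul_comm]
        calc f n • g ⊗ₜ[B] m = g ⊗ₜ[B] (f m • n) := by rw [← tmul_smul, hcomm]
          _ = (f m • g) ⊗ₜ[B] n := by rw [smul_tmul]
          _ = g m • f ⊗ₜ[B] n := by rw [hfg, smul_tmul']
  obtain ⟨u, hu⟩ := hsurj 1
  refine ⟨⟨fun t t' htt' => ?_, hsurj⟩⟩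
  have eq_smul (t : Module.Dual B N ⊗[B] N) : t = contractLeft B N t • u := by
    rw [← contract_smul_comm t u, hu, one_smul]
  rw [eq_smul t, eq_smul t', htt']

theorem apply_smul_comm_of_linearEquiv (e : N ≃ₗ[B] B) (f : Module.Dual B N) (x y : N) :
    f x • y = f y • x := by
  have f_eq (z : N) : f z = e z * f (e.symm 1) := by
    rw [← smul_eq_mul, ← map_smul, ← map_smul, smul_eq_mul, mul_one, e.symm_apply_apply]
  apply e.injective
  rw [map_smul, map_smul, f_eq x, f_eq y, smul_eq_mul, smul_eq_mul]
  ring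

theorem apply_smul_comm_of_localized_maximal
    (h : ∀ (P : Ideal B) [P.IsMaximal],
      Module.Invertible (Localization.AtPrime P) (Localization.AtPrime P ⊗[B] N))
    (f : Module.Dual B N) (x y : N) : f x • y = f y • x := by
  refine Module.eq_of_localization_maximal
    (fun (P : Ideal B) _ => Localization.AtPrime P ⊗[B] N)
    (fun (P : Ideal B) _ => TensorProduct.mk B (Localization.AtPrime P) N 1) _ _ fun P _ => ?_
  have := h P
  obtain ⟨e⟩ := nonempty_linearEquiv_of_isLocalRing (Localization.AtPrime P)
    (Localization.AtPrime P ⊗[B] N)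
  let mk := TensorProduct.mk B (Localization.AtPrime P) N 1
  let fP : Module.Dual (Localization.AtPrime P) (Localization.AtPrime P ⊗[B] N) :=
    IsLocalizedModule.mapExtendScalars P.primeCompl mk
      (Algebra.linearMap B (Localization.AtPrime P)) (Localization.AtPrime P) f
  have fP_mk (z : N) : fP (mk z) = algebraMap B (Localization.AtPrime P) (f z) :=
    IsLocalizedModule.map_apply P.primeCompl mk (Algebra.linearMap B (Localization.AtPrime P)) f z
  have := apply_smul_comm_of_linearEquiv e fP (mk x) (mk y)
  rwa [fP_mk, fP_mk, algebraMap_smul, algebraMap_smul, ← map_smul, ← map_smul] at this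

theorem exists_dual_apply_notMem [Module.FinitePresentation B N] (P : Ideal B) [P.IsPrime]
    [Module.Invertible (Localization.AtPrime P) (Localization.AtPrime P ⊗[B] N)] :
    ∃ (f : Module.Dual B N) (n : N), f n ∉ P := by
  obtain ⟨e⟩ := nonempty_linearEquiv_of_isLocalRing (Localization.AtPrime P)
    (Localization.AtPrime P ⊗[B] N)
  let mk := TensorProduct.mk B (Localization.AtPrime P) N 1
  obtain ⟨f, s, hf⟩ := Module.FinitePresentation.exists_lift_of_isLocalizedModule P.primeCompl
    (Algebra.linearMap B (Localization.AtPrime P)) ((e.toLinearMap.restrictScalars B) ∘ₗ mk)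
  obtain ⟨⟨n, t⟩, hn⟩ := IsLocalizedModule.surj P.primeCompl mk (e.symm 1)
  have hen : e (mk n) = algebraMap B _ t :=
    calc e (mk n) = e ((t : B) • e.symm 1) := congrArg e hn.symm
      _ = algebraMap B _ t := by
        rw [← algebraMap_smul (Localization.AtPrime P), map_smul, e.apply_symm_apply, smul_eq_mul,
          mul_one]
  have hfn : algebraMap B (Localization.AtPrime P) (f n) = algebraMap B _ (s * t) :=
    calc algebraMap B (Localization.AtPrime P) (f n)
        = (s : B) • e (mk n) := LinearMap.congr_fun hf n
      _ = algebraMap B _ (s * t) := by rw [hen, map_mul, ← smul_eq_mul, algebraMap_smul]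
  refine ⟨f, n, (IsLocalization.AtPrime.isUnit_to_map_iff (Localization.AtPrime P) P _).1 ?_⟩
  rw [hfn]
  exact IsLocalization.map_units (M := P.primeCompl) _ (s * t)

theorem invertible_of_localized_maximal [Module.FinitePresentation B N]
    (h : ∀ (P : Ideal B) [P.IsMaximal],
      Module.Invertible (Localization.AtPrime P) (Localization.AtPrime P ⊗[B] N)) :
    Module.Invertible B N := by
  refine invertible_of_apply_smul_comm (apply_smul_comm_of_localized_maximal h)
    (LinearMap.range_eq_top.1 ?_)
  by_contra hne
  obtain ⟨P, hP, hle⟩ := Ideal.exists_le_maximal _ hne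
  have := h P
  obtain ⟨f, n, hfn⟩ := exists_dual_apply_notMem (N := N) P
  exact hfn (hle ⟨f ⊗ₜ n, contractLeft_apply f n⟩)

end LocallyInvertible

section LocalCriterion

theorem one_tmul_quotient_eq_zero {R M : Type*} [CommRing R] [AddCommGroup M] [Module R M]
    (I : Ideal R) (m : M) : (1 : R ⧸ I) ⊗ₜ[R] m = 0 ↔ m ∈ (I • ⊤ : Submodule R M) := by
  rw [← (TensorProduct.quotTensorEquivQuotSMul M I).map_eq_zero_iff,
    TensorProduct.quotTensorEquivQuotSMul_mk_one_tmul, Submodule.Quotient.mk_eq_zero]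

theorem lTensor_quotient_injective_iff {R M M' : Type*} [CommRing R] [AddCommGroup M]
    [AddCommGroup M'] [Module R M] [Module R M'] (I : Ideal R) (g : M →ₗ[R] M') :
    Function.Injective (g.lTensor (R ⧸ I)) ↔
      (I • ⊤ : Submodule R M').comap g ≤ (I • ⊤ : Submodule R M) := by
  simp_rw [injective_iff_map_eq_zero,
    (TensorProduct.mk_surjective R M (R ⧸ I) Ideal.Quotient.mk_surjective).forall]
  simp [one_tmul_quotient_eq_zero, SetLike.le_def]

theorem isFiniteLength_quotient_of_pow_le {R : Type*} [CommRing R] [IsLocalRing R]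
    [IsNoetherianRing R] {I : Ideal R} {k : ℕ} (h : maximalIdeal R ^ k ≤ I) :
    IsFiniteLength R (R ⧸ I) := by
  rw [isFiniteLength_iff_isNoetherian_isArtinian]
  refine ⟨inferInstance, ?_⟩
  by_cases hI : I = ⊤
  · subst hI
    infer_instance
  have : Nontrivial (R ⧸ I) := Ideal.Quotient.nontrivial_iff.2 hI
  have : IsLocalRing (R ⧸ I) := .of_surjective' _ Ideal.Quotient.mk_surjective
  have : IsLocalHom (Ideal.Quotient.mk I) := .of_surjective _ Ideal.Quotient.mk_surjective
  have map_max : maximalIdeal (R ⧸ I) = (maximalIdeal R).map (Ideal.Quotient.mk I) := by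
    have comap_max := ((local_hom_TFAE (Ideal.Quotient.mk I)).out 0 4).1 this
    rw [← comap_max,
      Ideal.map_comap_of_surjective _ Ideal.Quotient.mk_surjective]
  have : IsArtinianRing (R ⧸ I) := by
    refine (isArtinianRing_iff_isNilpotent_maximalIdeal _).2 ⟨k, ?_⟩
    rwa [map_max, ← Ideal.map_pow, Ideal.zero_eq_bot, Ideal.map_eq_bot_iff_le_ker, Ideal.mk_ker]
  exact isArtinian_of_surjective_algebraMap (R := R ⧸ I) Ideal.Quotient.mk_surjective

theorem lTensor_injective_of_shortExact {R M M' : Type*} [CommRing R] [AddCommGroup M]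
    [AddCommGroup M'] [Module R M] [Module R M'] [Module.Flat R M'] (g : M →ₗ[R] M')
    {K N Q : Type*} [AddCommGroup K] [AddCommGroup N] [AddCommGroup Q] [Module R K] [Module R N]
    [Module R Q] {i : K →ₗ[R] N} {p : N →ₗ[R] Q} (hi : Function.Injective i)
    (hip : Function.Exact i p) (hp : Function.Surjective p)
    (hK : Function.Injective (g.lTensor K)) (hQ : Function.Injective (g.lTensor Q)) :
    Function.Injective (g.lTensor N) := by
  rw [injective_iff_map_eq_zero]
  intro x hx
  have hpx : p.rTensor M x = 0 := by
    apply hQ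
    rw [map_zero, ← LinearMap.comp_apply, LinearMap.lTensor_comp_rTensor,
      ← LinearMap.rTensor_comp_lTensor, LinearMap.comp_apply, hx, map_zero]
  obtain ⟨y, rfl⟩ := (rTensor_exact M hip hp x).1 hpx
  have hy : g.lTensor K y = 0 := by
    apply Module.Flat.rTensor_preserves_injective_linearMap (M := M') i hi
    rw [map_zero, ← LinearMap.comp_apply, LinearMap.rTensor_comp_lTensor,
      ← LinearMap.lTensor_comp_rTensor, LinearMap.comp_apply, hx]
  rw [hK (hy.trans (map_zero _).symm), map_zero]

theorem lTensor_injective_of_isFiniteLength {R M M' : Type*} [CommRing R] [IsLocalRing R]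
    [AddCommGroup M] [AddCommGroup M'] [Module R M] [Module R M'] [Module.Flat R M']
    {g : M →ₗ[R] M'} (hg : Function.Injective (g.lTensor (R ⧸ maximalIdeal R)))
    {N : Type*} [AddCommGroup N] [Module R N] (hN : IsFiniteLength R N) :
    Function.Injective (g.lTensor N) := by
  induction hN with
  | of_subsingleton => exact Function.injective_of_subsingleton _
  | @of_simple_quotient N _ _ K _ _ ih =>
    refine lTensor_injective_of_shortExact g K.injective_subtype (LinearMap.exact_subtype_mkQ K)
      K.mkQ_surjective ih ?_
    obtain ⟨I, hI, ⟨e⟩⟩ := isSimpleModule_iff_quot_maximal.1 ‹IsSimpleModule R (N ⧸ K)›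
    obtain rfl := IsLocalRing.eq_maximalIdeal hI
    have factor : g.lTensor (N ⧸ K) = (e.symm.rTensor M').toLinearMap ∘ₗ
        g.lTensor (R ⧸ maximalIdeal R) ∘ₗ (e.rTensor M).toLinearMap := by
      ext x y
      simp
    rw [factor]
    exact (e.symm.rTensor M').injective.comp (hg.comp (e.rTensor M).injective)

theorem iInf_sup_pow_smul_top_le {R : Type*} (B : Type*) {M : Type*} [CommRing R] [IsLocalRing R]
    [CommRing B] [IsLocalRing B] [IsNoetherianRing B] [Algebra R B] [IsLocalHom (algebraMap R B)]
    [AddCommGroup M] [Module R M] [Module B M] [IsScalarTower R B M] [Module.Finite B M]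
    (I : Ideal R) :
    ⨅ k : ℕ, ((I ⊔ maximalIdeal R ^ k) • ⊤ : Submodule R M) ≤ I • ⊤ := by
  set m := maximalIdeal R
  let IM : Submodule B M := I.map (algebraMap R B) • ⊤
  have mem_map_smul_top (J : Ideal R) (x : M) :
      x ∈ (J.map (algebraMap R B) • ⊤ : Submodule B M) ↔ x ∈ (J • ⊤ : Submodule R M) := by
    rw [← Submodule.restrictScalars_mem R, Ideal.smul_restrictScalars,
      Submodule.restrictScalars_top]
  have hne : m.map (algebraMap R B) ≠ ⊤ :=
    ne_top_of_le_ne_top (maximalIdeal.isMaximal B).ne_top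
      (((local_hom_TFAE (algebraMap R B)).out 0 2).1 ‹_›)
  intro x hx
  rw [← mem_map_smul_top, ← Submodule.Quotient.mk_eq_zero, ← Submodule.mem_bot B,
    ← Ideal.iInf_pow_smul_eq_bot_of_isLocalRing (M := M ⧸ IM) _ hne, Submodule.mem_iInf]
  intro k
  have hxk := Submodule.mem_iInf _ |>.1 hx k
  rw [← mem_map_smul_top, Ideal.map_sup, Submodule.sup_smul, Ideal.map_pow] at hxk
  obtain ⟨a, ha, b, hb, rfl⟩ := Submodule.mem_sup.1 hxk
  rw [Submodule.Quotient.mk_add, (Submodule.Quotient.mk_eq_zero _).2 ha, zero_add]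
  exact Submodule.smul_top_le_comap_smul_top _ IM.mkQ hb

theorem comap_smul_top_le_of_maximalIdeal {R : Type*} (B : Type*) {M M' : Type*} [CommRing R]
    [IsLocalRing R] [IsNoetherianRing R] [CommRing B] [IsLocalRing B] [IsNoetherianRing B]
    [Algebra R B] [IsLocalHom (algebraMap R B)] [AddCommGroup M] [AddCommGroup M'] [Module R M]
    [Module R M'] [Module B M] [IsScalarTower R B M] [Module.Finite B M] [Module.Flat R M']
    {g : M →ₗ[R] M'}
    (h : (maximalIdeal R • ⊤ : Submodule R M').comap g ≤ (maximalIdeal R • ⊤ : Submodule R M))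
    (I : Ideal R) : (I • ⊤ : Submodule R M').comap g ≤ (I • ⊤ : Submodule R M) := by
  refine le_trans (le_iInf fun k => ?_) (iInf_sup_pow_smul_top_le B I)
  calc (I • ⊤ : Submodule R M').comap g
      ≤ ((I ⊔ maximalIdeal R ^ k) • ⊤ : Submodule R M').comap g :=
        Submodule.comap_mono (Submodule.smul_mono_left le_sup_left)
    _ ≤ (I ⊔ maximalIdeal R ^ k) • ⊤ :=
        (lTensor_quotient_injective_iff _ g).1 <| lTensor_injective_of_isFiniteLength
          ((lTensor_quotient_injective_iff _ g).2 h)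
          (isFiniteLength_quotient_of_pow_le le_sup_right)

end LocalCriterion

section BaseChange

theorem invertible_tensorProduct_of_algHom {B C D M : Type*} [CommRing B] [CommRing C]
    [CommRing D] [Algebra B C] [Algebra B D] [AddCommGroup M] [Module B M] (g : C →ₐ[B] D)
    [Module.Invertible C (C ⊗[B] M)] : Module.Invertible D (D ⊗[B] M) := by
  let _ := g.toAlgebra
  have : IsScalarTower B C D := .of_algebraMap_eq fun x => (g.commutes x).symm
  exact .congr (AlgebraTensorModule.cancelBaseChange B C D D M)

theorem invertible_tensorProduct_of_isUnit {B M : Type*} [CommRing B] [AddCommGroup M]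
    [Module B M] (r : B) [Module.Invertible (Localization.Away r) (Localization.Away r ⊗[B] M)]
    {D : Type*} [CommRing D] [Algebra B D] (hr : IsUnit (algebraMap B D r)) :
    Module.Invertible D (D ⊗[B] M) :=
  invertible_tensorProduct_of_algHom (C := Localization.Away r)
    (IsLocalization.Away.liftAlgHom (A := B) (f := Algebra.ofId B D) r hr)

theorem invertible_tensorProduct_tensorProduct {B C D M : Type*} [CommRing B] [CommRing C]
    [CommRing D] [Algebra B C] [Algebra B D] [Algebra C D] [IsScalarTower B C D] [AddCommGroup M]
    [Module B M] [Module.Invertible D (D ⊗[B] M)] : Module.Invertible D (D ⊗[C] (C ⊗[B] M)) :=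
  .congr (AlgebraTensorModule.cancelBaseChange B C D D M).symm

theorem invertible_tensorProduct_of_isCoprime {B C M : Type*} [CommRing B] [CommRing C]
    [Algebra B C] [AddCommGroup M] [Module B M] [Module.FinitePresentation B M] (r d : B)
    [Module.Invertible (Localization.Away r) (Localization.Away r ⊗[B] M)]
    [Module.Invertible (Localization.Away d) (Localization.Away d ⊗[B] M)]
    (hrd : IsCoprime (algebraMap B C r) (algebraMap B C d)) :
    Module.Invertible C (C ⊗[B] M) := by
  refine invertible_of_localized_maximal fun P _ => ?_
  let L := Localization.AtPrime P
  have isUnit_of_notMem {b : B} (hb : algebraMap B C b ∉ P) : IsUnit (algebraMap B L b) := by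
    rw [IsScalarTower.algebraMap_apply B C L]
    exact IsLocalization.map_units (M := P.primeCompl) L ⟨_, hb⟩
  have : Module.Invertible L (L ⊗[B] M) := by
    by_cases hrP : algebraMap B C r ∈ P
    · refine invertible_tensorProduct_of_isUnit d (isUnit_of_notMem fun hdP => ?_)
      obtain ⟨x, y, hxy⟩ := hrd
      exact (Ideal.ne_top_iff_one P).1 Ideal.IsPrime.ne_top'
        (hxy ▸ P.add_mem (P.mul_mem_left x hrP) (P.mul_mem_left y hdP))
    · exact invertible_tensorProduct_of_isUnit r (isUnit_of_notMem hrP)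
  exact invertible_tensorProduct_tensorProduct

end BaseChange

section Trivialization

variable {B M : Type*} [CommRing B] [AddCommGroup M] [Module B M]

theorem isBaseChange_algHom_comp {C D : Type*} [CommRing C] [CommRing D] [Algebra B C]
    [Algebra B D] (g : C →ₐ[B] D) {f : M →ₗ[B] C} (hf : IsBaseChange C f) :
    IsBaseChange D (g.toLinearMap ∘ₗ f) := by
  let _ := g.toAlgebra
  have : IsScalarTower B C D := .of_algebraMap_eq fun x => (g.commutes x).symm
  have : IsBaseChange D ((Algebra.linearMap C D).restrictScalars B ∘ₗ f) :=
    hf.comp (IsBaseChange.linearMap C D)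
  exact this

theorem exists_unit_mul_eq_of_isBaseChange {D : Type*} [CommRing D] [Algebra B D]
    {f g : M →ₗ[B] D} (hf : IsBaseChange D f) (hg : IsBaseChange D g) :
    ∃ u : Dˣ, ∀ m, g m = u * f m := by
  let e : D ≃ₗ[D] D := hf.equiv.symm ≪≫ₗ hg.equiv
  have e_eq (x : D) : e x = x * e 1 := by rw [← smul_eq_mul, ← map_smul, smul_eq_mul, mul_one]
  have mul_symm : e 1 * e.symm 1 = 1 := by rw [mul_comm, ← e_eq, e.apply_symm_apply]
  refine ⟨⟨e 1, e.symm 1, mul_symm, by rw [mul_comm, mul_symm]⟩, fun m => ?_⟩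
  calc g m = e (f m) := by simp [e, hg.equiv_tmul]
    _ = e 1 * f m := by rw [e_eq, mul_comm]

/- Evaluating at `0` gives a second trivialization, and units of `S[X]` are constant for reduced
`S`. -/
theorem exists_eq_C_of_isBaseChange_polynomial {S : Type*} [CommRing S] [IsReduced S]
    [Algebra B S] {f : M →ₗ[B] Polynomial S} (hf : IsBaseChange (Polynomial S) f) (m : M) :
    ∃ s, f m = Polynomial.C s := by
  let ev : Polynomial S →ₐ[B] Polynomial S := (IsScalarTower.toAlgHom B S (Polynomial S)).comp
    ((Polynomial.aeval (0 : S)).restrictScalars B)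
  obtain ⟨u, hu⟩ := exists_unit_mul_eq_of_isBaseChange (isBaseChange_algHom_comp ev hf) hf
  have u_eq : (u : Polynomial S) = Polynomial.C ((u : Polynomial S).coeff 0) := by
    ext i
    rcases eq_or_ne i 0 with rfl | hi
    · simp
    · rw [((Polynomial.isUnit_iff_coeff_isUnit_isNilpotent.1 u.isUnit).2 i hi).eq_zero,
        Polynomial.coeff_C_of_ne_zero hi]
  refine ⟨(u : Polynomial S).coeff 0 * Polynomial.aeval 0 (f m), ?_⟩
  rw [map_mul, ← u_eq]
  exact hu m

end Trivialization

section Jouanolou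

variable {B : Type u} [CommRing B] (r d : B)

/-- The linear form `r x + d y` in two variables `x`, `y` over `B`. -/
noncomputable def linearForm : MvPolynomial (Fin 2) B :=
  r • MvPolynomial.X 0 + d • MvPolynomial.X 1

/-- Jouanolou's trick for the open subscheme `D(r) ∪ D(d)` of `Spec B`: the ring of functions on
the affine scheme `{(x, y) : r x + d y is invertible}`, which maps onto `D(r) ∪ D(d)` and has
sections over `D(r)` and over `D(d)` that are joined by a line over `D(rd)`. -/
abbrev JouanolouRing : Type u :=
  Localization.Away (linearForm r d)

namespace JouanolouRing

/-- The coordinate `x` of the affine scheme `{(x, y) : r x + d y is invertible}`. -/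
noncomputable def x : JouanolouRing r d := algebraMap (MvPolynomial (Fin 2) B) _ (MvPolynomial.X 0)

/-- The coordinate `y` of the affine scheme `{(x, y) : r x + d y is invertible}`. -/
noncomputable def y : JouanolouRing r d := algebraMap (MvPolynomial (Fin 2) B) _ (MvPolynomial.X 1)

instance : Module.Flat B (JouanolouRing r d) := .trans B (MvPolynomial (Fin 2) B) _

theorem isCoprime :
    IsCoprime (algebraMap B (JouanolouRing r d) r) (algebraMap B (JouanolouRing r d) d) := by
  have add_eq : algebraMap _ (JouanolouRing r d) (linearForm r d) = r • x r d + d • y r d := by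
    simp only [linearForm, map_add, Algebra.smul_def, map_mul,
      ← IsScalarTower.algebraMap_apply]
    rfl
  have isUnit_add : IsUnit (r • x r d + d • y r d) :=
    add_eq ▸ IsLocalization.Away.algebraMap_isUnit (linearForm r d)
  obtain ⟨c, hc⟩ := isUnit_add.exists_left_inv
  refine ⟨c * x r d, c * y r d, ?_⟩
  rw [← hc, Algebra.smul_def, Algebra.smul_def]
  ring

variable {r d} {D : Type*} [CommRing D] [Algebra B D]

theorem exists_algHom {a b : D} (hab : r • a + d • b = 1) :
    ∃ g : JouanolouRing r d →ₐ[B] D, g (x r d) = a ∧ g (y r d) = b := by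
  let ev : MvPolynomial (Fin 2) B →ₐ[B] D := MvPolynomial.aeval ![a, b]
  have ev_unit : IsUnit (ev (linearForm r d)) := by simp [ev, linearForm, hab]
  let g : JouanolouRing r d →ₐ[B] D := IsLocalization.Away.liftAlgHom (f := ev) _ ev_unit
  have g_algebraMap (p : MvPolynomial (Fin 2) B) : g (algebraMap _ _ p) = ev p :=
    IsLocalization.Away.lift_eq _ ev_unit p
  exact ⟨g, (g_algebraMap _).trans (by simp [ev]), (g_algebraMap _).trans (by simp [ev])⟩

theorem algHom_ext {g g' : JouanolouRing r d →ₐ[B] D} (hx : g (x r d) = g' (x r d))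
    (hy : g (y r d) = g' (y r d)) : g = g' := by
  refine IsLocalization.algHom_ext (A := MvPolynomial (Fin 2) B) (.powers (linearForm r d))
    (MvPolynomial.algHom_ext fun i => ?_)
  fin_cases i
  exacts [hx, hy]

theorem apply_eq_apply_of_homotopy {M : Type*} [AddCommGroup M] [Module B M] [IsReduced D]
    {β : M →ₗ[B] JouanolouRing r d} (hβ : IsBaseChange (JouanolouRing r d) β)
    {g₀ g₁ : JouanolouRing r d →ₐ[B] D}
    (h₀ : r • g₀ (x r d) + d • g₀ (y r d) = 1) (h₁ : r • g₁ (x r d) + d • g₁ (y r d) = 1)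
    (m : M) : g₀ (β m) = g₁ (β m) := by
  have line_unit : r • ((1 - .X) * .C (g₀ (x r d)) + .X * .C (g₁ (x r d)) : Polynomial D) +
      d • ((1 - .X) * .C (g₀ (y r d)) + .X * .C (g₁ (y r d)) : Polynomial D) = 1 :=
    calc _ = (1 - .X) * .C (r • g₀ (x r d) + d • g₀ (y r d)) +
          .X * .C (r • g₁ (x r d) + d • g₁ (y r d)) := by
          simp only [Polynomial.C_add, ← Polynomial.smul_C, smul_add, mul_add, mul_smul_comm]
          abel
      _ = (1 : Polynomial D) := by rw [h₀, h₁, map_one]; ring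
  obtain ⟨line, line_x, line_y⟩ := exists_algHom line_unit
  have eval_line₀ : ((Polynomial.aeval (0 : D)).restrictScalars B).comp line = g₀ :=
    algHom_ext (by simp [line_x]) (by simp [line_y])
  have eval_line₁ : ((Polynomial.aeval (1 : D)).restrictScalars B).comp line = g₁ :=
    algHom_ext (by simp [line_x]) (by simp [line_y])
  obtain ⟨s, hs⟩ :=
    exists_eq_C_of_isBaseChange_polynomial (isBaseChange_algHom_comp line hβ) m
  simp only [LinearMap.comp_apply, AlgHom.toLinearMap_apply] at hs
  rw [← eval_line₀, ← eval_line₁]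
  simp [hs]

end JouanolouRing

theorem exists_isBaseChange_away_of_hasFlatDimLE [IsLocalRing B] [IsNoetherianRing B]
    {M : Type w} [Small.{w} B] [AddCommGroup M] [Module B M] [Module.Finite B M] {n : ℕ}
    (hM : HasFlatDimLE B n M)
    [Module.Invertible (Localization.Away r) (Localization.Away r ⊗[B] M)]
    [Module.Invertible (Localization.Away d) (Localization.Away d ⊗[B] M)] :
    ∃ (φ : M →ₗ[B] Localization.Away r) (ψ : M →ₗ[B] Localization.Away d),
      IsBaseChange (Localization.Away r) φ ∧ IsBaseChange (Localization.Away d) ψ ∧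
      ∀ (T : Type u) [CommRing T] [Algebra B T] [IsReduced T] (f : Localization.Away r →ₐ[B] T)
        (g : Localization.Away d →ₐ[B] T) (m : M), f (φ m) = g (ψ m) := by
  have : Module.FinitePresentation B M := Module.finitePresentation_of_finite B M
  let C := JouanolouRing r d
  have : Module.Invertible C (C ⊗[B] M) :=
    invertible_tensorProduct_of_isCoprime r d (JouanolouRing.isCoprime r d)
  obtain ⟨e⟩ := hM.nonempty_linearEquiv_tensorProduct (C := C)
  let β : M →ₗ[B] C := e.toLinearMap.restrictScalars B ∘ₗ TensorProduct.mk B C M 1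
  have hβ : IsBaseChange C β := .of_equiv e fun _ => rfl
  obtain ⟨a, ha⟩ :=
    (IsLocalization.Away.algebraMap_isUnit (S := Localization.Away r) r).exists_right_inv
  obtain ⟨b, hb⟩ :=
    (IsLocalization.Away.algebraMap_isUnit (S := Localization.Away d) d).exists_right_inv
  rw [← Algebra.smul_def] at ha hb
  obtain ⟨gr, gr_x, gr_y⟩ := JouanolouRing.exists_algHom (r := r) (d := d) (a := a) (b := 0)
    (by rw [ha, smul_zero, add_zero])
  obtain ⟨gd, gd_x, gd_y⟩ := JouanolouRing.exists_algHom (r := r) (d := d) (a := 0) (b := b)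
    (by rw [hb, smul_zero, zero_add])
  refine ⟨gr.toLinearMap ∘ₗ β, gd.toLinearMap ∘ₗ β, isBaseChange_algHom_comp _ hβ,
    isBaseChange_algHom_comp _ hβ, fun T _ _ _ f g m => ?_⟩
  refine JouanolouRing.apply_eq_apply_of_homotopy hβ (g₀ := f.comp gr) (g₁ := g.comp gd) ?_ ?_ m
  · simp [gr_x, gr_y, ← map_smul, ha]
  · simp [gd_x, gd_y, ← map_smul, hb]

end Jouanolou

theorem algebraMap_mem_nonZeroDivisors_of_flat {R : Type*} (B : Type*) [CommRing R] [CommRing B]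
    [Algebra R B] [Module.Flat R B] {r : R} (hr : r ∈ nonZeroDivisors R) :
    algebraMap R B r ∈ nonZeroDivisors B := by
  rw [mem_nonZeroDivisors_iff_left]
  intro x hx
  have hreg : IsSMulRegular B r := Module.Flat.isSMulRegular_of_nonZeroDivisors hr
  exact hreg.right_eq_zero_of_smul (by rwa [Algebra.smul_def])

section FlatOverBase

variable {R B M : Type*} [CommRing R] [CommRing B] [Algebra R B] [AddCommGroup M] [Module R M]
  [Module B M] [IsScalarTower R B M] [Module.Flat R M]

variable (R B M) in
theorem flat_tensorProduct (L : Type*) [CommRing L] [Algebra B L] [Algebra R L]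
    [IsScalarTower R B L] [Module.Flat B L] : Module.Flat R (L ⊗[B] M) := by
  rw [Module.Flat.iff_lTensor_preserves_injective_linearMap]
  intro N N' _ _ _ _ i hi
  have hinj : Function.Injective ((AlgebraTensorModule.lTensor B M i).lTensor L) :=
    Module.Flat.lTensor_preserves_injective_linearMap _
      (Module.Flat.lTensor_preserves_injective_linearMap i hi)
  have hassoc : (AlgebraTensorModule.assoc R B B L M N').toLinearMap ∘ₗ
        AlgebraTensorModule.lTensor B (L ⊗[B] M) i =
      (AlgebraTensorModule.lTensor B M i).lTensor L ∘ₗ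
        (AlgebraTensorModule.assoc R B B L M N).toLinearMap := by
    ext; simp
  have hcomp : Function.Injective ((AlgebraTensorModule.assoc R B B L M N').toLinearMap ∘ₗ
      AlgebraTensorModule.lTensor B (L ⊗[B] M) i) := by
    rw [hassoc]
    exact hinj.comp (AlgebraTensorModule.assoc R B B L M N).injective
  exact Function.Injective.of_comp (f := AlgebraTensorModule.assoc R B B L M N') hcomp

omit [Module.Flat R M] in
theorem mem_map_smul_top_iff (q : Ideal R) (m : M) :
    m ∈ (q.map (algebraMap R B) • ⊤ : Submodule B M) ↔ m ∈ (q • ⊤ : Submodule R M) := by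
  rw [← Submodule.restrictScalars_mem R, Ideal.smul_restrictScalars, Submodule.restrictScalars_top]

theorem mem_smul_top_iff_mem_map {R B : Type*} [CommRing R] [CommRing B] [Algebra R B]
    (I : Ideal R) (b : B) : b ∈ (I • ⊤ : Submodule R B) ↔ b ∈ I.map (algebraMap R B) := by
  rw [← mem_map_smul_top_iff (B := B), smul_eq_mul, Ideal.mul_top]

theorem lTensor_quotient_map_injective {N N' : Type*} [AddCommGroup N] [Module R N] [Module B N]
    [IsScalarTower R B N] [AddCommGroup N'] [Module R N'] [Module B N'] [IsScalarTower R B N']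
    (q : Ideal R) (i : N →ₗ[B] N')
    (hi : Function.Injective ((i.restrictScalars R).lTensor (R ⧸ q))) :
    Function.Injective (i.lTensor (B ⧸ q.map (algebraMap R B))) := by
  rw [lTensor_quotient_injective_iff] at hi ⊢
  intro x hx
  exact (mem_map_smul_top_iff q x).2 (hi ((mem_map_smul_top_iff q (i x)).1 hx))

theorem lTensor_injective_of_flat_baseChange {C D K N N' : Type*} [CommRing C] [CommRing D]
    [Algebra B C] [Algebra C D] [Algebra B D] [IsScalarTower B C D] [AddCommGroup K] [Module B K]
    [AddCommGroup N] [Module B N] [AddCommGroup N'] [Module B N'] {i : K →ₗ[B] N}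
    {f : N →ₗ[B] N'} (hf : Function.Surjective f) (hex : Function.Exact i f)
    [Module.Flat C (C ⊗[B] N')] (hi : Function.Injective (i.lTensor C)) :
    Function.Injective (i.lTensor D) := by
  have hD : Function.Injective ((i.baseChange C).lTensor D) :=
    LinearMap.lTensor_injective_of_exact_of_flat (f.baseChange C)
      (LinearMap.lTensor_surjective C hf) (i.baseChange C) hi (lTensor_exact C hex hf) D
  have hcancel : AlgebraTensorModule.lTensor C D i ∘ₗ
        (AlgebraTensorModule.cancelBaseChange B C C D K).toLinearMap =
      (AlgebraTensorModule.cancelBaseChange B C C D N).toLinearMap ∘ₗ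
        (i.baseChange C).lTensor D := by
    ext; simp
  rw [← EquivLike.injective_comp (AlgebraTensorModule.cancelBaseChange B C C D K)]
  convert (AlgebraTensorModule.cancelBaseChange B C C D N).injective.comp hD using 1
  exact congrArg DFunLike.coe hcancel

theorem free_of_flat_tensorProduct_quotient [IsLocalRing B] [IsNoetherianRing B]
    [Module.Finite B M] (q : Ideal R) (hq : q.map (algebraMap R B) ≤ maximalIdeal B)
    [Module.Flat (B ⧸ q.map (algebraMap R B)) ((B ⧸ q.map (algebraMap R B)) ⊗[B] M)] :
    Module.Free B M := by
  obtain ⟨n, f, hf⟩ := Module.Finite.exists_fin' B M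
  let i := (LinearMap.ker f).subtype
  have hex : Function.Exact i f := LinearMap.exact_subtype_ker_map f
  have hbar : Function.Injective (i.lTensor (B ⧸ q.map (algebraMap R B))) :=
    lTensor_quotient_map_injective q i <| LinearMap.lTensor_injective_of_exact_of_flat
      (f.restrictScalars R) hf (i.restrictScalars R) (Submodule.subtype_injective _) hex (R ⧸ q)
  let : Algebra (B ⧸ q.map (algebraMap R B)) (ResidueField B) :=
    (Ideal.Quotient.factor hq).toAlgebra
  have : IsScalarTower B (B ⧸ q.map (algebraMap R B)) (ResidueField B) :=
    .of_algebraMap_eq fun _ => rfl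
  exact Module.free_of_lTensor_residueField_injective i f hf hex
    (lTensor_injective_of_flat_baseChange hf hex hbar)

theorem nonempty_linearEquiv_of_invertible_tensorProduct {L D N : Type*} [CommRing L] [CommRing D]
    [Nontrivial D] [Algebra L D] [AddCommGroup N] [Module L N] [Module.Free L N]
    [Module.Finite L N] [Module.Invertible D (D ⊗[L] N)] : Nonempty (N ≃ₗ[L] L) := by
  have : Nontrivial L := (algebraMap L D).domain_nontrivial
  obtain ⟨e⟩ := Module.Invertible.free_iff_linearEquiv.1
    (inferInstance : Module.Free D (D ⊗[L] N))
  apply FiniteDimensional.nonempty_linearEquiv_of_finrank_eq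
  rw [← Module.finrank_baseChange (R := D), e.finrank_eq, Module.finrank_self, Module.finrank_self]

theorem nonempty_linearEquiv_localization_of_map_maximalIdeal [IsLocalRing R] [IsNoetherianRing B]
    [Module.Flat R B] [Module.Finite B M] (J : Ideal B) [J.IsPrime]
    (hJ : (maximalIdeal R).map (algebraMap R B) = J) {r : R} (hr : r ∈ nonZeroDivisors R)
    [Module.Invertible (Localization.Away (algebraMap R B r))
      (Localization.Away (algebraMap R B r) ⊗[B] M)] :
    Nonempty (Localization.AtPrime J ⊗[B] M ≃ₗ[Localization.AtPrime J] Localization.AtPrime J) := by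
  let L := Localization.AtPrime J
  have hflatL : Module.Flat R L := Module.Flat.trans R B L
  have hflat : Module.Flat R (L ⊗[B] M) := flat_tensorProduct R B M L
  have hmax : (maximalIdeal R).map (algebraMap R L) = maximalIdeal L := by
    rw [IsScalarTower.algebraMap_eq R B L, ← Ideal.map_map, hJ,
      Localization.AtPrime.map_eq_maximalIdeal]
  have hfree : Module.Free L (L ⊗[B] M) := by
    have : ((maximalIdeal R).map (algebraMap R L)).IsMaximal := hmax ▸ inferInstance
    let := Ideal.Quotient.field ((maximalIdeal R).map (algebraMap R L))
    exact free_of_flat_tensorProduct_quotient (maximalIdeal R) hmax.le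
  let D := Localization.Away (algebraMap R L r)
  have : Nontrivial D := (IsLocalization.injective D (M := Submonoid.powers (algebraMap R L r))
    (Submonoid.powers_le.2 (algebraMap_mem_nonZeroDivisors_of_flat L hr))).nontrivial
  have hinv : Module.Invertible D (D ⊗[B] M) :=
    invertible_tensorProduct_of_isUnit (algebraMap R B r) <| by
      rw [← IsScalarTower.algebraMap_apply R B D, IsScalarTower.algebraMap_apply R L D]
      exact IsLocalization.Away.algebraMap_isUnit _
  have : Module.Invertible D (D ⊗[L] (L ⊗[B] M)) := invertible_tensorProduct_tensorProduct
  exact nonempty_linearEquiv_of_invertible_tensorProduct (D := D)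

end FlatOverBase

theorem exists_notMem_invertible_away {B M : Type*} [CommRing B] [AddCommGroup M] [Module B M]
    [Module.FinitePresentation B M] (P : Ideal B) [P.IsPrime]
    (e : Localization.AtPrime P ⊗[B] M ≃ₗ[Localization.AtPrime P] Localization.AtPrime P) :
    ∃ d ∉ P, Module.Invertible (Localization.Away d) (Localization.Away d ⊗[B] M) := by
  obtain ⟨d, hd, l, -⟩ := Module.FinitePresentation.exists_lift_equiv_of_isLocalizedModule
    P.primeCompl (TensorProduct.mk B (Localization.AtPrime P) M 1)
    (Algebra.linearMap B (Localization.AtPrime P)) (e.restrictScalars B)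
  let e₁ := (IsLocalizedModule.isBaseChange (.powers d) (Localization.Away d)
    (LocalizedModule.mkLinearMap (.powers d) M)).equiv
  let e₂ := (IsLocalizedModule.isBaseChange (.powers d) (Localization.Away d)
    (LocalizedModule.mkLinearMap (.powers d) B)).equiv
  exact ⟨d, hd, .congr (e₂ ≪≫ₗ l.symm ≪≫ₗ e₁.symm)⟩

section Gluing

variable {B M : Type*} [CommRing B] [AddCommGroup M] [Module B M] {r d : B}

theorem exists_algebraMap_eq_of_apply_eq (hr : r ∈ nonZeroDivisors B)
    (hreg : ∀ n b, r ^ n ∣ d * b → r ^ n ∣ b) {T : Type*} [CommRing T] [Algebra B T]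
    (hT : Function.Injective (algebraMap B T)) (f : Localization.Away r →ₐ[B] T)
    (g : Localization.Away d →ₐ[B] T) {s : Localization.Away r} {t : Localization.Away d}
    (hst : f s = g t) : ∃ b : B,
      algebraMap B (Localization.Away r) b = s ∧ algebraMap B (Localization.Away d) b = t := by
  obtain ⟨k, b, hb⟩ := IsLocalization.Away.surj r s
  obtain ⟨l, c, hc⟩ := IsLocalization.Away.surj d t
  have hreg_pow (j : ℕ) {b : B} (h : r ^ k ∣ d ^ j * b) : r ^ k ∣ b := by
    induction j with
    | zero => simpa using h
    | succ j ih => exact ih (hreg k _ (by rwa [← mul_assoc, ← pow_succ']))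
  have hbc : d ^ l * b = r ^ k * c := by
    apply hT
    have hfb := congrArg f hb
    have hgc := congrArg g hc
    simp only [map_mul, map_pow, AlgHom.commutes] at hfb hgc ⊢
    rw [← hfb, ← hgc, hst]
    ring
  obtain ⟨a, rfl⟩ := hreg_pow l ⟨c, hbc⟩
  obtain rfl : d ^ l * a = c := by
    rw [← mul_cancel_left_mem_nonZeroDivisors (pow_mem hr k), ← hbc]
    ring
  refine ⟨a, ?_, ?_⟩
  · rw [map_mul, map_pow, mul_comm] at hb
    exact ((IsLocalization.Away.algebraMap_isUnit r).pow k).mul_left_cancel hb.symm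
  · rw [map_mul, map_pow, mul_comm] at hc
    exact ((IsLocalization.Away.algebraMap_isUnit d).pow l).mul_left_cancel hc.symm

theorem exists_apply_eq_pow_of_isBaseChange_away (hr : r ∈ nonZeroDivisors B) {φ : M →ₗ[B] B}
    (hφ : IsBaseChange (Localization.Away r) (Algebra.linearMap B (Localization.Away r) ∘ₗ φ)) :
    ∃ x k, φ x = r ^ k := by
  have := (isLocalizedModule_iff_isBaseChange (.powers r) (Localization.Away r) _).2 hφ
  obtain ⟨⟨x, ⟨_, k, rfl⟩⟩, h⟩ := IsLocalizedModule.surj (.powers r)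
    (Algebra.linearMap B (Localization.Away r) ∘ₗ φ) 1
  refine ⟨x, k, IsLocalization.injective (Localization.Away r) (Submonoid.powers_le.2 hr) ?_⟩
  simpa [Submonoid.smul_def, Algebra.smul_def] using h.symm

theorem injective_of_isBaseChange_away (hM : IsSMulRegular M r) {φ : M →ₗ[B] B}
    (hφ : IsBaseChange (Localization.Away r) (Algebra.linearMap B (Localization.Away r) ∘ₗ φ)) :
    Function.Injective φ := by
  have := (isLocalizedModule_iff_isBaseChange (.powers r) (Localization.Away r) _).2 hφ
  rw [injective_iff_map_eq_zero]
  intro x hx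
  obtain ⟨⟨_, k, rfl⟩, h⟩ := (IsLocalizedModule.eq_zero_iff (.powers r)
    (Algebra.linearMap B (Localization.Away r) ∘ₗ φ) (m := x)).1 (by simp [hx])
  exact (hM.pow k).right_eq_zero_of_smul h

end Gluing

theorem exists_isBaseChange_of_hasFlatDimLE {B : Type u} {M : Type w} [CommRing B] [IsLocalRing B]
    [IsNoetherianRing B] [IsReduced B] [Small.{w} B] [AddCommGroup M] [Module B M]
    [Module.Finite B M] {n : ℕ} (hM : HasFlatDimLE B n M) {r d : B} (hr : r ∈ nonZeroDivisors B)
    (hd : d ∈ nonZeroDivisors B) (hreg : ∀ n b, r ^ n ∣ d * b → r ^ n ∣ b)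
    [Module.Invertible (Localization.Away r) (Localization.Away r ⊗[B] M)]
    [Module.Invertible (Localization.Away d) (Localization.Away d ⊗[B] M)] :
    ∃ φ : M →ₗ[B] B,
      IsBaseChange (Localization.Away r) (Algebra.linearMap B (Localization.Away r) ∘ₗ φ) ∧
      IsBaseChange (Localization.Away d) (Algebra.linearMap B (Localization.Away d) ∘ₗ φ) := by
  obtain ⟨φr, φd, hφr, hφd, hagree⟩ := exists_isBaseChange_away_of_hasFlatDimLE r d hM
  let T := Localization.Away (r * d)
  have hT : Function.Injective (algebraMap B T) :=
    IsLocalization.injective T (Submonoid.powers_le.2 (mul_mem hr hd))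
  have hunit : IsUnit (algebraMap B T r) ∧ IsUnit (algebraMap B T d) := by
    rw [← IsUnit.mul_iff, ← map_mul]
    exact IsLocalization.Away.algebraMap_isUnit _
  let f : Localization.Away r →ₐ[B] T :=
    IsLocalization.Away.liftAlgHom r (f := Algebra.ofId B T) hunit.1
  let g : Localization.Away d →ₐ[B] T :=
    IsLocalization.Away.liftAlgHom d (f := Algebra.ofId B T) hunit.2
  choose φ hφ using fun m => exists_algebraMap_eq_of_apply_eq hr hreg hT f g (hagree T f g m)
  have hinj : Function.Injective (algebraMap B (Localization.Away r)) :=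
    IsLocalization.injective _ (Submonoid.powers_le.2 hr)
  let φ' : M →ₗ[B] B :=
    { toFun := φ
      map_add' := fun x y => hinj <| by simp only [map_add, (hφ _).1]
      map_smul' := fun b x => hinj <| by simp [(hφ _).1, Algebra.smul_def] }
  have hφr' : Algebra.linearMap B (Localization.Away r) ∘ₗ φ' = φr :=
    LinearMap.ext fun m => (hφ m).1
  have hφd' : Algebra.linearMap B (Localization.Away d) ∘ₗ φ' = φd :=
    LinearMap.ext fun m => (hφ m).2
  exact ⟨φ', hφr' ▸ hφr, hφd' ▸ hφd⟩

/-- A module has no embedded primes if there is no strict inclusion between its associated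
primes. -/
def HasNoEmbeddedPrimes (A N : Type*) [CommRing A] [AddCommGroup N] [Module A N] : Prop :=
  ∀ q ∈ associatedPrimes A N, ∀ q' ∈ associatedPrimes A N, q ≤ q' → q = q'

theorem HasNoEmbeddedPrimes.isSMulRegular {B N : Type*} [CommRing B] [IsNoetherianRing B]
    [AddCommGroup N] [Module B N] (hN : HasNoEmbeddedPrimes B N) {J : Ideal B}
    (hJ : J ∈ associatedPrimes B N) (hJN : J ≤ Module.annihilator B N) {d : B} (hd : d ∉ J) :
    IsSMulRegular N d := by
  rw [isSMulRegular_iff_right_eq_zero_of_smul]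
  intro x hx
  by_contra hx0
  have hmem : d ∈ ⋃ Q ∈ associatedPrimes B N, (Q : Set B) := by
    rw [biUnion_associatedPrimes_eq_zero_divisors]
    exact ⟨x, hx0, hx⟩
  simp only [Set.mem_iUnion] at hmem
  obtain ⟨Q, hQ, hdQ⟩ := hmem
  have hJQ : J ≤ Q := hJN.trans (Submodule.annihilator_top.ge.trans hQ.annihilator_le)
  exact hd (hN J hJ Q hQ hJQ ▸ hdQ)

section Rigidity

variable {B M : Type*} [CommRing B] [IsNoetherianRing B] [AddCommGroup M] [Module B M]
  {φ : M →ₗ[B] B} {J : Ideal B} [J.IsPrime]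

theorem mem_associatedPrimes_quotient_smul_top {x : M} (hx : φ x ∉ J) :
    J ∈ associatedPrimes B (M ⧸ (J • ⊤ : Submodule B M)) := by
  rw [AssociatedPrimes.mem_iff, isAssociatedPrime_iff]
  refine ⟨inferInstance, Submodule.Quotient.mk x, ?_⟩
  ext b
  rw [Submodule.mem_colon_singleton, Submodule.mem_bot, ← Submodule.Quotient.mk_smul,
    Submodule.Quotient.mk_eq_zero]
  refine ⟨fun hb => Submodule.smul_mem_smul hb trivial, fun hb => ?_⟩
  have hφ : b * φ x ∈ J := by
    simpa using Submodule.smul_top_le_comap_smul_top J φ hb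
  exact (Ideal.IsPrime.mem_or_mem inferInstance hφ).resolve_right hx

theorem mem_smul_top_of_apply_mem (hφ : Function.Injective φ) {x : M} (hx : φ x ∉ J)
    (hM : HasNoEmbeddedPrimes B (M ⧸ (J • ⊤ : Submodule B M))) {y : M} (hy : φ y ∈ J) :
    y ∈ (J • ⊤ : Submodule B M) := by
  have hreg : IsSMulRegular (M ⧸ (J • ⊤ : Submodule B M)) (φ x) :=
    hM.isSMulRegular (mem_associatedPrimes_quotient_smul_top hx)
      ((Module.isTorsionBySet_iff_subset_annihilator B _).1
        (Module.isTorsionBySet_quotient_ideal_smul M J)) hx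
  have hxy : φ x • y = φ y • x := hφ (by simp [mul_comm])
  rw [← Submodule.Quotient.mk_eq_zero]
  apply hreg.right_eq_zero_of_smul
  rw [← Submodule.Quotient.mk_smul, hxy, Submodule.Quotient.mk_eq_zero]
  exact Submodule.smul_mem_smul hy trivial

end Rigidity

section FlatLocal

variable {R B M : Type*} [CommRing R] [IsLocalRing R] [IsNoetherianRing R] [CommRing B]
  [IsLocalRing B] [IsNoetherianRing B] [Algebra R B] [IsLocalHom (algebraMap R B)]
  [Module.Flat R B] {J : Ideal B}

theorem algebraMap_dvd_of_dvd_mul [J.IsPrime] (hJ : (maximalIdeal R).map (algebraMap R B) = J)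
    {d : B} (hd : d ∉ J) (r : R) {b : B} (h : algebraMap R B r ∣ d * b) : algebraMap R B r ∣ b := by
  have hmax : (maximalIdeal R • ⊤ : Submodule R B).comap (LinearMap.mulLeft R d) ≤
      maximalIdeal R • ⊤ := by
    intro x hx
    rw [Submodule.mem_comap, mem_smul_top_iff_mem_map, hJ] at hx
    rw [mem_smul_top_iff_mem_map, hJ]
    exact (Ideal.IsPrime.mem_or_mem inferInstance hx).resolve_left hd
  have hspan := comap_smul_top_le_of_maximalIdeal B hmax (Ideal.span {r})
  simp only [SetLike.le_def, Submodule.mem_comap, mem_smul_top_iff_mem_map, Ideal.map_span,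
    Set.image_singleton, Ideal.mem_span_singleton] at hspan
  exact hspan h

theorem bijective_of_apply_eq_algebraMap [AddCommGroup M] [Module R M] [Module B M]
    [IsScalarTower R B M] [Module.Finite B M] {φ : M →ₗ[B] B} (hφ : Function.Injective φ)
    (hJ : ∀ x, φ x ∈ (maximalIdeal R).map (algebraMap R B) →
      x ∈ ((maximalIdeal R).map (algebraMap R B) • ⊤ : Submodule B M)) {r : R}
    (hr : r ∈ nonZeroDivisors R) {x : M} (hx : φ x = algebraMap R B r) : Function.Bijective φ := by
  have hmax : (maximalIdeal R • ⊤ : Submodule R B).comap (φ.restrictScalars R) ≤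
      maximalIdeal R • ⊤ := fun y hy =>
    (mem_map_smul_top_iff _ y).1 (hJ y ((mem_smul_top_iff_mem_map _ _).1 hy))
  have hmem : x ∈ (Ideal.span {r} • ⊤ : Submodule R M) := by
    apply comap_smul_top_le_of_maximalIdeal B hmax
    rw [Submodule.mem_comap, mem_smul_top_iff_mem_map]
    exact hx ▸ Ideal.mem_map_of_mem _ (Ideal.mem_span_singleton_self r)
  rw [Submodule.ideal_span_singleton_smul, Submodule.mem_smul_pointwise_iff_exists] at hmem
  obtain ⟨y, -, rfl⟩ := hmem
  have hy : φ y = 1 := by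
    rw [← algebraMap_smul B, map_smul, smul_eq_mul] at hx
    exact (mul_cancel_left_mem_nonZeroDivisors (algebraMap_mem_nonZeroDivisors_of_flat B hr)).1
      (hx.trans (mul_one _).symm)
  exact ⟨hφ, fun b => ⟨b • y, by rw [map_smul, hy, smul_eq_mul, mul_one]⟩⟩

end FlatLocal

theorem nonempty_linearEquiv_of_hasNoEmbeddedPrimes_quotient {R : Type v} {B : Type u} {M : Type w}
    [CommRing R] [IsLocalRing R] [IsNoetherianRing R] [CommRing B] [IsLocalRing B]
    [IsNoetherianRing B] [IsReduced B] [Small.{w} B] [Algebra R B] [IsLocalHom (algebraMap R B)]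
    [Module.Flat R B] [AddCommGroup M] [Module R M] [Module B M] [IsScalarTower R B M]
    [Module.Flat R M] [Module.Finite B M] {n : ℕ} (hfd : HasFlatDimLE B n M)
    (hJ : ((maximalIdeal R).map (algebraMap R B)).IsPrime) {r : R} (hr : r ∈ nonZeroDivisors R)
    [Module.Invertible (Localization.Away (algebraMap R B r))
      (Localization.Away (algebraMap R B r) ⊗[B] M)]
    (hM : HasNoEmbeddedPrimes B
      (M ⧸ ((maximalIdeal R).map (algebraMap R B) • ⊤ : Submodule B M))) :
    Nonempty (M ≃ₗ[B] B) := by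
  have : Module.FinitePresentation B M := Module.finitePresentation_of_finite B M
  obtain ⟨e⟩ := nonempty_linearEquiv_localization_of_map_maximalIdeal (B := B) (M := M) _ rfl hr
  obtain ⟨d, hd, hinv⟩ := exists_notMem_invertible_away _ e
  have hrB : algebraMap R B r ∈ nonZeroDivisors B := algebraMap_mem_nonZeroDivisors_of_flat B hr
  have hreg (s : R) (b : B) : algebraMap R B s ∣ d * b → algebraMap R B s ∣ b :=
    algebraMap_dvd_of_dvd_mul rfl hd s
  have hdB : d ∈ nonZeroDivisors B := mem_nonZeroDivisors_iff_left.2 fun b hb => by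
    simpa [hb] using hreg 0 b
  obtain ⟨φ, hφr, hφd⟩ := exists_isBaseChange_of_hasFlatDimLE hfd hrB hdB
    fun k b => by simpa only [map_pow] using hreg (r ^ k) b
  have hrM : IsSMulRegular M (algebraMap R B r) :=
    (isSMulRegular_algebraMap_iff B).2 (Module.Flat.isSMulRegular_of_nonZeroDivisors hr)
  have hφ : Function.Injective φ := injective_of_isBaseChange_away hrM hφr
  obtain ⟨x, k, hx⟩ := exists_apply_eq_pow_of_isBaseChange_away hrB hφr
  obtain ⟨y, l, hy⟩ := exists_apply_eq_pow_of_isBaseChange_away hdB hφd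
  have hyJ : φ y ∉ (maximalIdeal R).map (algebraMap R B) := hy ▸ mt (hJ.mem_of_pow_mem l) hd
  exact ⟨.ofBijective φ <| bijective_of_apply_eq_algebraMap hφ
    (fun _ => mem_smul_top_of_apply_mem hφ hyJ hM) (pow_mem hr k) (hx.trans (map_pow _ r k).symm)⟩

section Quotient

theorem HasNoEmbeddedPrimes.congr {B N N' : Type*} [CommRing B] [AddCommGroup N] [Module B N]
    [AddCommGroup N'] [Module B N'] (e : N ≃ₗ[B] N') (h : HasNoEmbeddedPrimes B N) :
    HasNoEmbeddedPrimes B N' := by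
  rwa [HasNoEmbeddedPrimes, ← LinearEquiv.AssociatedPrimes.eq e]

theorem HasNoEmbeddedPrimes.of_surjective {B C N : Type*} [CommRing B] [CommRing C] [Algebra B C]
    (hBC : Function.Surjective (algebraMap B C)) [AddCommGroup N] [Module B N] [Module C N]
    [IsScalarTower B C N] (h : HasNoEmbeddedPrimes B N) : HasNoEmbeddedPrimes C N := by
  have comap_mem {q : Ideal C} (hq : q ∈ associatedPrimes C N) :
      q.comap (algebraMap B C) ∈ associatedPrimes B N := by
    obtain ⟨hq, x, rfl⟩ := hq
    refine ⟨hq.comap _, x, ?_⟩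
    rw [Ideal.comap_radical]
    congr 1
    ext b
    simp
  intro q hq q' hq' hle
  exact Ideal.comap_injective_of_surjective _ hBC
    (h _ (comap_mem hq) _ (comap_mem hq') (Ideal.comap_mono hle))

theorem nonempty_quotient_smul_top_equiv {B N : Type*} [CommRing B] [AddCommGroup N] [Module B N]
    {I J : Ideal B} (hIJ : I ≤ J) :
    Nonempty ((N ⧸ (J • ⊤ : Submodule B N)) ≃ₗ[B]
      ((B ⧸ I) ⊗[B] N ⧸
        (J.map (algebraMap B (B ⧸ I)) • ⊤ : Submodule (B ⧸ I) ((B ⧸ I) ⊗[B] N)))) := by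
  let g : N →ₗ[B] (B ⧸ I) ⊗[B] N := TensorProduct.mk B (B ⧸ I) N 1
  have hg : Function.Surjective g :=
    TensorProduct.mk_surjective B N (B ⧸ I) Ideal.Quotient.mk_surjective
  let f : N →ₗ[B] ((B ⧸ I) ⊗[B] N ⧸
      (J.map (algebraMap B (B ⧸ I)) • ⊤ : Submodule (B ⧸ I) ((B ⧸ I) ⊗[B] N))) :=
    (Submodule.mkQ _).restrictScalars B ∘ₗ g
  have hf : Function.Surjective f := (Submodule.mkQ_surjective _).comp hg
  have hker : J • ⊤ = LinearMap.ker f := by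
    ext n
    have hmap : (J • ⊤ : Submodule B ((B ⧸ I) ⊗[B] N)) = (J • ⊤ : Submodule B N).map g := by
      rw [Submodule.map_smul'', Submodule.map_top, LinearMap.range_eq_top.2 hg]
    have hkerg : LinearMap.ker g ≤ J • ⊤ := fun m hm =>
      Submodule.smul_mono_left hIJ ((one_tmul_quotient_eq_zero I m).1 hm)
    calc n ∈ (J • ⊤ : Submodule B N)
        ↔ n ∈ ((J • ⊤ : Submodule B N).map g).comap g := by
          rw [Submodule.comap_map_eq_self hkerg]
      _ ↔ f n = 0 := by
          rw [Submodule.mem_comap, ← hmap, ← mem_map_smul_top_iff (B := B ⧸ I)]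
          exact (Submodule.Quotient.mk_eq_zero _).symm
  exact ⟨(Submodule.quotEquivOfEq _ _ hker).trans (f.quotKerEquivOfSurjective hf)⟩

theorem nonempty_linearEquiv_quotient_tensorProduct {R : Type*} {R' : Type v} {B : Type u}
    {N : Type w} [CommRing R] [IsLocalRing R] [CommRing R'] [IsLocalRing R'] [IsNoetherianRing R']
    [Algebra R R'] (hR : Function.Surjective (algebraMap R R')) [CommRing B] [IsLocalRing B]
    [IsNoetherianRing B] [Algebra R B] [AddCommGroup N] [Module B N] [Module.Finite B N]
    (I : Ideal B) [Algebra R' (B ⧸ I)] [IsScalarTower R R' (B ⧸ I)] [IsReduced (B ⧸ I)]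
    [Module.Flat R' (B ⧸ I)] [Module.Flat R' ((B ⧸ I) ⊗[B] N)] {n : ℕ}
    (hfd : HasFlatDimLE (B ⧸ I) n ((B ⧸ I) ⊗[B] N))
    (hI : I ≤ (maximalIdeal R).map (algebraMap R B))
    (hJ : ((maximalIdeal R).map (algebraMap R B)).IsPrime) {r : R}
    (hr : algebraMap R R' r ∈ nonZeroDivisors R')
    [Module.Invertible (Localization.Away (algebraMap R B r))
      (Localization.Away (algebraMap R B r) ⊗[B] N)]
    (hN : HasNoEmbeddedPrimes B
      (N ⧸ ((maximalIdeal R).map (algebraMap R B) • ⊤ : Submodule B N))) :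
    Nonempty ((B ⧸ I) ⊗[B] N ≃ₗ[B ⧸ I] B ⧸ I) := by
  have : Nontrivial (B ⧸ I) :=
    Ideal.Quotient.nontrivial_iff.2 fun h => hJ.ne_top (top_le_iff.1 (h ▸ hI))
  have : IsLocalRing (B ⧸ I) :=
    .of_surjective' (Ideal.Quotient.mk I) Ideal.Quotient.mk_surjective
  have hmap : (maximalIdeal R').map (algebraMap R' (B ⧸ I)) =
      ((maximalIdeal R).map (algebraMap R B)).map (algebraMap B (B ⧸ I)) := by
    rw [← map_maximalIdeal_of_surjective _ hR, Ideal.map_map, Ideal.map_map,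
      ← IsScalarTower.algebraMap_eq, ← IsScalarTower.algebraMap_eq]
  have hJ' : ((maximalIdeal R').map (algebraMap R' (B ⧸ I))).IsPrime := by
    rw [hmap]
    exact Ideal.map_isPrime_of_surjective Ideal.Quotient.mk_surjective (by simpa using hI)
  have : IsLocalHom (algebraMap R' (B ⧸ I)) :=
    ((local_hom_TFAE _).out 0 2).2 (le_maximalIdeal hJ'.ne_top)
  let D := Localization.Away (algebraMap R' (B ⧸ I) (algebraMap R R' r))
  have : Module.Invertible D (D ⊗[B] N) := by
    refine invertible_tensorProduct_of_isUnit (algebraMap R B r) ?_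
    rw [IsScalarTower.algebraMap_apply B (B ⧸ I) D, ← IsScalarTower.algebraMap_apply R B,
      IsScalarTower.algebraMap_apply R R' (B ⧸ I)]
    exact IsLocalization.Away.algebraMap_isUnit _
  have : Module.Invertible D (D ⊗[B ⧸ I] ((B ⧸ I) ⊗[B] N)) :=
    invertible_tensorProduct_tensorProduct
  obtain ⟨e⟩ := nonempty_quotient_smul_top_equiv (N := N) hI
  refine nonempty_linearEquiv_of_hasNoEmbeddedPrimes_quotient hfd hJ' hr ?_
  rw [hmap]
  exact (hN.congr e).of_surjective Ideal.Quotient.mk_surjective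

section Flat

variable {R B N : Type*} [CommRing R] [CommRing B] [Algebra R B] (q : Ideal R)

theorem flat_quotient_map [Module.Flat R B] : Module.Flat (R ⧸ q) (B ⧸ q.map (algebraMap R B)) :=
  .of_linearEquiv (Algebra.TensorProduct.quotIdealMapEquivQuotTensor B q).toLinearEquiv

variable (N) in
theorem flat_quotient_tensorProduct [AddCommGroup N] [Module R N] [Module B N]
    [IsScalarTower R B N] [Module.Flat R N] :
    Module.Flat (R ⧸ q) ((B ⧸ q.map (algebraMap R B)) ⊗[B] N) := by
  have hq : (q.map (algebraMap R B) • ⊤ : Submodule B N).restrictScalars R = q • ⊤ := by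
    rw [Ideal.smul_restrictScalars, Submodule.restrictScalars_top]
  let e : (B ⧸ q.map (algebraMap R B)) ⊗[B] N ≃ₗ[R] (R ⧸ q) ⊗[R] N :=
    (quotTensorEquivQuotSMul N (q.map (algebraMap R B))).restrictScalars R ≪≫ₗ
      (Submodule.Quotient.restrictScalarsEquiv R _).symm ≪≫ₗ
      Submodule.quotEquivOfEq _ _ hq ≪≫ₗ (quotTensorEquivQuotSMul N q).symm
  exact .of_linearEquiv (e.extendScalarsOfSurjective Ideal.Quotient.mk_surjective)

end Flat

theorem nonempty_linearEquiv_of_hasNoEmbeddedPrimes_quotient_of_notMem {R : Type v} {B : Type u}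
    {N : Type w} [CommRing R] [IsLocalRing R] [IsNoetherianRing R] [CommRing B] [IsLocalRing B]
    [IsNoetherianRing B] [Algebra R B] [Module.Flat R B] [AddCommGroup N] [Module R N] [Module B N]
    [IsScalarTower R B N] [Module.Flat R N] [Module.Finite B N]
    (hJ : ((maximalIdeal R).map (algebraMap R B)).IsPrime) (q : Ideal R) [q.IsPrime]
    {I : Ideal B} (hI : q.map (algebraMap R B) = I) [IsReduced (B ⧸ I)] {n : ℕ}
    (hfd : HasFlatDimLE (B ⧸ I) n ((B ⧸ I) ⊗[B] N)) {r : R} (hr : r ∉ q)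
    [Module.Invertible (Localization.Away (algebraMap R B r))
      (Localization.Away (algebraMap R B r) ⊗[B] N)]
    (hN : HasNoEmbeddedPrimes B
      (N ⧸ ((maximalIdeal R).map (algebraMap R B) • ⊤ : Submodule B N))) :
    Nonempty (N ≃ₗ[B] B) := by
  subst hI
  have hq : q.map (algebraMap R B) ≤ (maximalIdeal R).map (algebraMap R B) :=
    Ideal.map_mono (le_maximalIdeal Ideal.IsPrime.ne_top')
  have hqB : q.map (algebraMap R B) ≤ maximalIdeal B := hq.trans (le_maximalIdeal hJ.ne_top)
  have : Nontrivial (B ⧸ q.map (algebraMap R B)) :=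
    Ideal.Quotient.nontrivial_iff.2 (ne_top_of_le_ne_top hJ.ne_top hq)
  have : IsLocalRing (R ⧸ q) := .of_surjective' (Ideal.Quotient.mk q) Ideal.Quotient.mk_surjective
  have : Module.Flat (R ⧸ q) (B ⧸ q.map (algebraMap R B)) := flat_quotient_map q
  have : Module.Flat (R ⧸ q) ((B ⧸ q.map (algebraMap R B)) ⊗[B] N) :=
    flat_quotient_tensorProduct N q
  have hr' : algebraMap R (R ⧸ q) r ∈ nonZeroDivisors (R ⧸ q) :=
    mem_nonZeroDivisors_of_ne_zero (mt Ideal.Quotient.eq_zero_iff_mem.1 hr)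
  obtain ⟨e⟩ := nonempty_linearEquiv_quotient_tensorProduct (R' := R ⧸ q)
    Ideal.Quotient.mk_surjective _ hfd hq hJ hr' hN
  have : Module.Flat (B ⧸ q.map (algebraMap R B)) ((B ⧸ q.map (algebraMap R B)) ⊗[B] N) :=
    .of_linearEquiv e
  have : Module.Free B N := free_of_flat_tensorProduct_quotient q hqB
  have : Module.Invertible (B ⧸ q.map (algebraMap R B)) ((B ⧸ q.map (algebraMap R B)) ⊗[B] N) :=
    .congr e.symm
  exact nonempty_linearEquiv_of_invertible_tensorProduct (D := B ⧸ q.map (algebraMap R B))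

end Quotient

section Fiber

theorem HasNoEmbeddedPrimes.of_injective {A N N' : Type*} [CommRing A] [AddCommGroup N]
    [Module A N] [AddCommGroup N'] [Module A N'] {f : N' →ₗ[A] N} (hf : Function.Injective f)
    (h : HasNoEmbeddedPrimes A N) : HasNoEmbeddedPrimes A N' := fun q hq q' hq' =>
  h q (associatedPrimes.subset_of_injective hf hq) q' (associatedPrimes.subset_of_injective hf hq')

open Module.associatedPrimes in
theorem HasNoEmbeddedPrimes.of_isLocalizedModule {A B N N' : Type*} [CommRing A]
    [IsNoetherianRing A] [CommRing B] [Algebra A B] [AddCommGroup N] [Module A N] [AddCommGroup N']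
    [Module A N'] [Module B N'] [IsScalarTower A B N'] (W : Submonoid A) [IsLocalization W B]
    (f : N →ₗ[A] N') [IsLocalizedModule W f] (h : HasNoEmbeddedPrimes A N) :
    HasNoEmbeddedPrimes B N' := by
  rw [HasNoEmbeddedPrimes,
    ← preimage_comap_associatedPrimes_eq_associatedPrimes_of_isLocalizedModule
      W B f]
  intro q hq q' hq' hle
  rw [← IsLocalization.map_under W B q, ← IsLocalization.map_under W B q',
    Ideal.under, Ideal.under, h _ hq _ hq' (Ideal.comap_mono hle)]

section Flat

variable {R A M : Type*} [CommRing R] [AddCommGroup M] [Module R M] [Module.Flat R M] (p : Ideal R)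
  [p.IsPrime]

theorem one_tmul_residueField_eq_zero_iff (m : M) :
    (1 : p.ResidueField) ⊗ₜ[R] m = 0 ↔ m ∈ (p • ⊤ : Submodule R M) := by
  let g : (R ⧸ p) →ₗ[R] p.ResidueField :=
    (IsScalarTower.toAlgHom R (R ⧸ p) p.ResidueField).toLinearMap
  have hg : Function.Injective (g.rTensor M) :=
    Module.Flat.rTensor_preserves_injective_linearMap g
      (IsFractionRing.injective (R ⧸ p) p.ResidueField)
  have hgm : g.rTensor M (1 ⊗ₜ m) = 1 ⊗ₜ m :=
    congrArg (· ⊗ₜ[R] m) (map_one (algebraMap (R ⧸ p) p.ResidueField))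
  rw [← one_tmul_quotient_eq_zero, ← hgm, LinearMap.map_eq_zero_iff _ hg]

variable [CommRing A] [Algebra R A] [Module A M] [IsScalarTower R A M]

theorem HasNoEmbeddedPrimes.quotient_smul_top
    (h : HasNoEmbeddedPrimes A (M ⊗[R] p.ResidueField)) :
    HasNoEmbeddedPrimes A (M ⧸ (p.map (algebraMap R A) • ⊤ : Submodule A M)) := by
  let g : M →ₗ[A] M ⊗[R] p.ResidueField := (AlgebraTensorModule.mk R A M p.ResidueField).flip 1
  have hg : p.map (algebraMap R A) • ⊤ = LinearMap.ker g := by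
    ext m
    rw [mem_map_smul_top_iff, ← one_tmul_residueField_eq_zero_iff,
      ← (TensorProduct.comm R p.ResidueField M).map_eq_zero_iff]
    rfl
  exact h.of_injective (f := Submodule.liftQ _ g hg.le)
    (LinearMap.ker_eq_bot.1 (Submodule.ker_liftQ_eq_bot _ g hg.le hg.ge))

variable {p} in
theorem HasNoEmbeddedPrimes.localization_quotient_smul_top [IsNoetherianRing A]
    (h : HasNoEmbeddedPrimes A (M ⊗[R] p.ResidueField)) (W : Submonoid A) (B : Type*) [CommRing B]
    [Algebra A B] [IsLocalization W B] [Algebra R B] [IsScalarTower R A B] :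
    HasNoEmbeddedPrimes B
      (B ⊗[A] M ⧸ (p.map (algebraMap R B) • ⊤ : Submodule B (B ⊗[A] M))) := by
  have hp : (p.map (algebraMap R A) • ⊤ : Submodule A M).localized' B W
      (TensorProduct.mk A B M 1) = p.map (algebraMap R B) • ⊤ := by
    rw [Submodule.localized'_smul, Ideal.localized'_eq_map, Submodule.localized'_top,
      Ideal.map_map, ← IsScalarTower.algebraMap_eq]
  rw [← hp]
  exact h.quotient_smul_top.of_isLocalizedModule W
    (Submodule.toLocalizedQuotient' B W (TensorProduct.mk A B M 1) (p.map (algebraMap R A) • ⊤))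

end Flat

section Smooth

variable {R : Type u} {A : Type v} [CommRing R] [CommRing A] [Algebra R A] [Algebra.Smooth R A]

theorem isReduced_quotient_map (q : Ideal R) [q.IsPrime] :
    IsReduced (A ⧸ q.map (algebraMap R A)) := by
  rw [← Ideal.isRadical_iff_quotient_reduced]
  rintro a ⟨n, ha⟩
  have mem_iff (a : A) : a ∈ q.map (algebraMap R A) ↔ (1 : q.ResidueField) ⊗ₜ[R] a = 0 := by
    rw [one_tmul_residueField_eq_zero_iff, mem_smul_top_iff_mem_map]
  have : IsReduced (q.Fiber A) := isReduced_of_smooth_field q.ResidueField (q.Fiber A)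
  rw [mem_iff] at ha ⊢
  refine eq_zero_of_pow_eq_zero (R := q.Fiber A) (n := n) ?_
  rw [Algebra.TensorProduct.tmul_pow, one_pow, ha]

theorem isReduced_localization_quotient_map (q : Ideal R) [q.IsPrime] (W : Submonoid A)
    {B : Type v} [CommRing B] [Algebra A B] [IsLocalization W B] [Algebra R B]
    [IsScalarTower R A B] : IsReduced (B ⧸ q.map (algebraMap R B)) := by
  have := isReduced_quotient_map (A := A) q
  rw [IsScalarTower.algebraMap_eq R A B, ← Ideal.map_map]
  exact isReduced_localizationPreserves
    (Algebra.algebraMapSubmonoid (A ⧸ q.map (algebraMap R A)) W)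
    (B ⧸ (q.map (algebraMap R A)).map (algebraMap A B)) this

theorem isPrime_map_of_liesOver (p : Ideal R) [p.IsPrime] (P : Ideal A) [P.IsPrime]
    [P.LiesOver p] : (p.map (algebraMap R (Localization.AtPrime P))).IsPrime := by
  obtain ⟨Q, hQ, rfl⟩ : ∃ Q : Ideal (p.Fiber A), Q.IsPrime ∧
      Q.comap Algebra.TensorProduct.includeRight = P :=
    let e := PrimeSpectrum.primesOverOrderIsoFiber R A p
    ⟨(e ⟨P, ‹_›, ‹_›⟩).asIdeal, (e ⟨P, ‹_›, ‹_›⟩).isPrime,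
      congrArg Subtype.val (e.symm_apply_apply ⟨P, ‹_›, ‹_›⟩)⟩
  have := isDomain_of_smooth_field p.ResidueField (p.Fiber A) Q (Localization.AtPrime Q)
  rw [IsScalarTower.algebraMap_eq R A, ← Ideal.map_map, ← Ideal.Quotient.isDomain_iff_prime]
  exact (Ideal.Fiber.algEquivAux₂ p Q).toMulEquiv.isDomain_iff.1 this

theorem exists_hasFlatDimLE_quotient (P : Ideal A) [P.IsPrime] (q : Ideal R)
    (hq : q.map (algebraMap R A) ≤ P) (L : Type v) [CommRing L] [Algebra A L]
    [IsLocalization.AtPrime L P] [Algebra R L] [IsScalarTower R A L] {I : Ideal L}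
    (hI : (q.map (algebraMap R A)).map (algebraMap A L) = I) (M : Type w) [AddCommGroup M]
    [Module (L ⧸ I) M] [Algebra (R ⧸ q) (L ⧸ I)] [IsScalarTower R (R ⧸ q) (L ⧸ I)]
    [Module (R ⧸ q) M] [IsScalarTower (R ⧸ q) (L ⧸ I) M] [Module.Flat (R ⧸ q) M] :
    ∃ n, HasFlatDimLE (L ⧸ I) n M := by
  subst hI
  let P' := P.map (Ideal.Quotient.mk (q.map (algebraMap R A)))
  have : P'.IsPrime := Ideal.map_isPrime_of_surjective Ideal.Quotient.mk_surjective (by simpa)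
  have : P'.LiesOver P := ⟨by
    rw [Ideal.under, Ideal.Quotient.algebraMap_eq,
      Ideal.comap_map_of_surjective' _ Ideal.Quotient.mk_surjective]
    simpa⟩
  have : Algebra.Smooth (R ⧸ q) (A ⧸ q.map (algebraMap R A)) :=
    .of_equiv (Algebra.TensorProduct.quotIdealMapEquivQuotTensor A q).symm
  have : IsLocalization.AtPrime (L ⧸ (q.map (algebraMap R A)).map (algebraMap A L)) P' := by
    rw [IsLocalization.AtPrime,
      ← Ideal.algebraMapSubmonoid_primeCompl_of_liesOver_surjective P' P
        Ideal.Quotient.mk_surjective]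
    infer_instance
  have : IsScalarTower R (A ⧸ q.map (algebraMap R A))
      (L ⧸ (q.map (algebraMap R A)).map (algebraMap A L)) := .to₁₃₄ R A _ _
  have : IsScalarTower (R ⧸ q) (A ⧸ q.map (algebraMap R A))
      (L ⧸ (q.map (algebraMap R A)).map (algebraMap A L)) := 
    .of_algebraMap_eq' <| Ideal.Quotient.ringHom_ext <| by
      rw [← Ideal.Quotient.algebraMap_eq, ← IsScalarTower.algebraMap_eq, RingHom.comp_assoc,
        ← IsScalarTower.algebraMap_eq, ← IsScalarTower.algebraMap_eq]
  exact exists_hasFlatDimLE (R ⧸ q) P' M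

end Smooth

end Fiber

theorem exists_le_mem_of_mem_closure {R : Type*} [CommRing R] {U : Set (PrimeSpectrum R)}
    (hUc : IsCompact U) (hUo : IsOpen U) {p : PrimeSpectrum R} (hp : p ∈ closure U) :
    ∃ q ∈ U, q ≤ p := by
  obtain ⟨t, rfl⟩ := PrimeSpectrum.isCompact_isOpen_iff.1 ⟨hUc, hUo⟩
  have hU : (PrimeSpectrum.zeroLocus t : Set (PrimeSpectrum R))ᶜ =
      ⋃ r ∈ t, PrimeSpectrum.basicOpen r := by
    ext; simp [Set.subset_def]
  rw [hU, t.closure_biUnion] at hp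
  obtain ⟨r, hr, hp⟩ := Set.mem_iUnion₂.1 hp
  rw [← PrimeSpectrum.localization_away_comap_range (Localization.Away r) r, ← Set.image_univ,
    ← PrimeSpectrum.zeroLocus_bot, PrimeSpectrum.closure_image_comap_zeroLocus] at hp
  obtain ⟨_, hq, hqp⟩ := Ideal.exists_minimalPrimes_le hp
  obtain ⟨Q, hQ, -, rfl⟩ := Ideal.exists_comap_eq_of_mem_minimalPrimes _ _ hq
  refine ⟨PrimeSpectrum.comap (algebraMap R (Localization.Away r)) ⟨Q, hQ⟩, ?_, hqp⟩
  rw [hU]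
  refine Set.mem_biUnion hr ?_
  rw [← PrimeSpectrum.localization_away_comap_range (Localization.Away r) r]
  exact Set.mem_range_self _

theorem invertible_localization_away {A M : Type*} [CommRing A] [AddCommGroup M] [Module A M]
    [Module.FinitePresentation A M] {a : A}
    (h : ∀ (P : Ideal A) [P.IsPrime], a ∉ P →
      Module.Invertible (Localization.AtPrime P) (Localization.AtPrime P ⊗[A] M)) :
    Module.Invertible (Localization.Away a) (Localization.Away a ⊗[A] M) := by
  refine invertible_of_localized_maximal fun Q hQ => ?_
  have ha : a ∉ Q.under A := fun ha =>
    hQ.ne_top (Ideal.eq_top_of_isUnit_mem _ ha (IsLocalization.Away.algebraMap_isUnit a))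
  have := h (Q.under A) ha
  have hunit (y : (Q.under A).primeCompl) :
      IsUnit (Algebra.ofId A (Localization.AtPrime Q) y) := by
    rw [Algebra.ofId_apply, IsScalarTower.algebraMap_apply A (Localization.Away a)]
    exact IsLocalization.map_units (Localization.AtPrime Q) (⟨_, y.2⟩ : Q.primeCompl)
  have : Module.Invertible (Localization.AtPrime Q) (Localization.AtPrime Q ⊗[A] M) :=
    invertible_tensorProduct_of_algHom
      (IsLocalization.liftAlgHom (S := Localization.AtPrime (Q.under A)) hunit)
  exact invertible_tensorProduct_tensorProduct

theorem exists_hasFlatDimLE_quotient_tensorProduct {R : Type u} {A : Type v} {N : Type w}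
    [CommRing R] [CommRing A] [Algebra R A] [Algebra.Smooth R A] (P : Ideal A) [P.IsPrime]
    {q : Ideal R} (hqP : q ≤ P.under R) (B : Type v) [CommRing B] [Algebra A B]
    [IsLocalization.AtPrime B P] [Algebra R B] [IsScalarTower R A B] [AddCommGroup N] [Module B N]
    [Module R N] [IsScalarTower R B N] [Module.Flat R N] :
    ∃ n, HasFlatDimLE (B ⧸ q.map (algebraMap R B)) n ((B ⧸ q.map (algebraMap R B)) ⊗[B] N) := by
  have := flat_quotient_tensorProduct (B := B) N q
  refine exists_hasFlatDimLE_quotient P q (Ideal.map_le_iff_le_comap.2 hqP) B ?_ _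
  rw [Ideal.map_map, ← IsScalarTower.algebraMap_eq]

theorem nonempty_tensorProduct_linearEquiv_of_isLocalization {R : Type u} {A : Type v} {M : Type w}
    [CommRing R] [IsNoetherianRing R] [CommRing A] [Algebra R A] [Algebra.Smooth R A]
    [AddCommGroup M] [Module A M] [Module R M] [IsScalarTower R A M] [Module.Finite A M]
    [Module.Flat R M] {p : Ideal R} [p.IsPrime] (P : Ideal A) [P.IsPrime] [P.LiesOver p]
    (S : Type u) [CommRing S] [Algebra R S] [IsLocalization.AtPrime S p]
    (B : Type v) [CommRing B] [Algebra A B] [IsLocalization.AtPrime B P] [Algebra R B]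
    [IsScalarTower R A B] [Algebra S B] [IsScalarTower R S B]
    (hp : (p.map (algebraMap R B)).IsPrime) {q : Ideal R} [q.IsPrime] (hqp : q ≤ p)
    {r : R} (hr : r ∉ q) [Module.Invertible (Localization.Away (algebraMap R A r))
      (Localization.Away (algebraMap R A r) ⊗[A] M)]
    (hM : HasNoEmbeddedPrimes A (M ⊗[R] p.ResidueField)) : Nonempty (B ⊗[A] M ≃ₗ[B] B) := by
  have : IsNoetherianRing A := Algebra.FiniteType.isNoetherianRing R A
  have : IsLocalRing S := IsLocalization.AtPrime.isLocalRing S p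
  have : IsLocalRing B := IsLocalization.AtPrime.isLocalRing B P
  have : IsNoetherianRing S := IsLocalization.isNoetherianRing p.primeCompl S inferInstance
  have : IsNoetherianRing B := IsLocalization.isNoetherianRing P.primeCompl B inferInstance
  have : Module.Flat A B := IsLocalization.flat B P.primeCompl
  have : Module.Flat R B := .trans R A B
  have : Module.Flat S B := (Module.flat_iff_of_isLocalization S p.primeCompl B).2 inferInstance
  have : Module.Flat R (B ⊗[A] M) := flat_tensorProduct R A M B
  have : Module.Flat S (B ⊗[A] M) :=
    (Module.flat_iff_of_isLocalization S p.primeCompl _).2 inferInstance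
  have map_map_eq (I : Ideal R) :
      (I.map (algebraMap R S)).map (algebraMap S B) = I.map (algebraMap R B) := by
    rw [Ideal.map_map, ← IsScalarTower.algebraMap_eq]
  have hmB : (maximalIdeal S).map (algebraMap S B) = p.map (algebraMap R B) := by
    rw [← IsLocalization.AtPrime.map_eq_maximalIdeal p S, map_map_eq]
  have hdisj : Disjoint (p.primeCompl : Set R) q :=
    Set.disjoint_left.2 fun _ hx hxq => hx (hqp hxq)
  have : (q.map (algebraMap R S)).IsPrime :=
    IsLocalization.isPrime_of_isPrime_disjoint p.primeCompl S q ‹_› hdisj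
  have hrS : algebraMap R S r ∉ q.map (algebraMap R S) := fun h =>
    hr (IsLocalization.under_map_of_isPrime_disjoint p.primeCompl S ‹_› hdisj ▸ h)
  have : IsReduced (B ⧸ q.map (algebraMap R B)) :=
    isReduced_localization_quotient_map q P.primeCompl
  obtain ⟨n, hfd⟩ := exists_hasFlatDimLE_quotient_tensorProduct (N := B ⊗[A] M) P
    (hqp.trans_eq (Ideal.over_def P p)) B
  let D := Localization.Away (algebraMap S B (algebraMap R S r))
  have : Module.Invertible D (D ⊗[A] M) := by
    refine invertible_tensorProduct_of_isUnit (algebraMap R A r) ?_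
    rw [IsScalarTower.algebraMap_apply A B D, ← IsScalarTower.algebraMap_apply R A B,
      IsScalarTower.algebraMap_apply R S B]
    exact IsLocalization.Away.algebraMap_isUnit _
  have : Module.Invertible D (D ⊗[B] (B ⊗[A] M)) := invertible_tensorProduct_tensorProduct
  refine nonempty_linearEquiv_of_hasNoEmbeddedPrimes_quotient_of_notMem (hmB ▸ hp)
    (q.map (algebraMap R S)) (map_map_eq q) hfd hrS ?_
  rw [hmB]
  exact hM.localization_quotient_smul_top P.primeCompl B

end InvertibleOfFlat

open InvertibleOfFlat in
theorem invertible_of_flat_of_no_embedded_components_on_fibers_general.{u, v, w}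
    {R : Type u} [CommRing R] [IsNoetherianRing R] {U : TopologicalSpace.Opens (PrimeSpectrum R)}
    {A : Type v} [CommRing A] [Algebra R A] [Algebra.Smooth R A]
    {M : Type w} [AddCommGroup M] [Module A M] [Module R M] [IsScalarTower R A M]
    [Module.Finite A M] [Module.Flat R M]
    (hinv : ∀ (P : Ideal A) (hP : P.IsPrime),
      (⟨P.comap (algebraMap R A), hP.comap _⟩ : PrimeSpectrum R) ∈ U →
      Nonempty (LocalizedModule P.primeCompl M ≃ₗ[Localization.AtPrime P]
        Localization.AtPrime P))
    (P : Ideal A) [P.IsPrime]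
    (hU : (⟨P.under R, inferInstance⟩ : PrimeSpectrum R) ∈ closure (U : Set (PrimeSpectrum R)))
    (hemb : HasNoEmbeddedPrimes A (M ⊗[R] (P.under R).ResidueField)) :
    Nonempty (LocalizedModule P.primeCompl M ≃ₗ[Localization.AtPrime P]
      Localization.AtPrime P) := by
  have : IsNoetherianRing A := Algebra.FiniteType.isNoetherianRing R A
  have : Module.FinitePresentation A M := Module.finitePresentation_of_finite A M
  let equiv (Q : Ideal A) [Q.IsPrime] := (IsLocalizedModule.isBaseChange Q.primeCompl
    (Localization.AtPrime Q) (LocalizedModule.mkLinearMap Q.primeCompl M)).equiv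
  obtain ⟨q, hqU, hqP⟩ := exists_le_mem_of_mem_closure
    (TopologicalSpace.NoetherianSpace.isCompact _) U.isOpen hU
  obtain ⟨_, ⟨r, rfl⟩, hrq, hrU⟩ :=
    PrimeSpectrum.isTopologicalBasis_basic_opens.exists_subset_of_mem_open hqU U.isOpen
  have : Module.Invertible (Localization.Away (algebraMap R A r))
      (Localization.Away (algebraMap R A r) ⊗[A] M) :=
    invertible_localization_away fun Q hQ hrQ =>
      .congr ((equiv Q).trans (hinv Q hQ (hrU hrQ)).some).symm
  let _ := Localization.AtPrime.algebraOfLiesOver (P.under R) P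
  obtain ⟨e⟩ := nonempty_tensorProduct_linearEquiv_of_isLocalization P
    (Localization.AtPrime (P.under R)) (Localization.AtPrime P)
    (isPrime_map_of_liesOver (P.under R) P) hqP hrq hemb
  exact ⟨(equiv P).symm.trans e⟩

theorem invertible_of_flat_of_no_embedded_components_on_fibers
    (R : Type) [CommRing R] [IsNoetherianRing R]
    (U : TopologicalSpace.Opens (PrimeSpectrum R)) (hU : Dense (U : Set (PrimeSpectrum R)))
    (A : Type) [CommRing A] [Algebra R A] [Algebra.Smooth R A]
    (M : Type) [AddCommGroup M] [Module A M] [Module R M] [IsScalarTower R A M]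
    [Module.Finite A M] [Module.Flat R M]
    -- `M` is invertible over `X_U`
    (hinv : ∀ (P : Ideal A) (hP : P.IsPrime),
      (⟨P.comap (algebraMap R A), hP.comap _⟩ : PrimeSpectrum R) ∈ U →
      Nonempty ((LocalizedModule P.primeCompl M) ≃ₗ[Localization.AtPrime P]
        Localization.AtPrime P))
    -- no embedded components on the fibers: no strict inclusions among associated primes
    -- of `M ⊗_R k(p)`
    (hemb : ∀ (p : Ideal R) (_ : p.IsPrime), ∀ q q' : Ideal A,
      q ∈ associatedPrimes A
        (M ⊗[R] (ResidueField (Localization.AtPrime p))) →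
      q' ∈ associatedPrimes A
        (M ⊗[R] (ResidueField (Localization.AtPrime p))) →
      q ≤ q' → q = q') :
    ∀ (P : Ideal A) (_ : P.IsPrime),
      Nonempty ((LocalizedModule P.primeCompl M) ≃ₗ[Localization.AtPrime P]
        Localization.AtPrime P) := by
  exact fun P _ => invertible_of_flat_of_no_embedded_components_on_fibers_general hinv P (hU _)
    fun q hq q' hq' => hemb (P.under R) inferInstance q q' hq hq'
end

section
/- Let R be a regular local ring (or more generally a locally factorial noetherian integral domain) and M a finitely generated reflexive R-module of rank 1. Then M is isomorphic to an invertible (locally free rank 1) R-module. -/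
/-!
STATEMENT 2: Let `R` be a regular local ring (or more generally a locally factorial
noetherian integral domain) and `M` a finitely generated reflexive `R`-module of rank 1.
Then `M` is isomorphic to an invertible (locally free of rank 1) `R`-module.

We formalize the general version: `R` is a noetherian integral domain which is locally
factorial (all localizations at primes are UFDs), `M` is a finitely generated `R`-module
which is reflexive (the canonical map to the double dual is bijective) and of rank 1
(`Frac(R) ⊗ M` is 1-dimensional).  The conclusion "locally free of rank 1" is expressed
as: the localization of `M` at every prime is a free module of rank 1 over the local ring.
-/

/-!
Over a factorial domain `A` every nonzero functional can be divided by the gcd of its values, so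
a nonzero dual `N*` contains a functional `φ` whose values have no common factor. If `N*` has rank
one, then any `ψ` satisfies `s φ = t ψ` with `t ≠ 0`; as `t` divides all the values of `s φ`, it
divides `s`, and `ψ` is a multiple of `φ`. Hence `N* ≅ A`.

If `M` is reflexive and `M*` is finitely generated, then localizing `M ≅ M**` gives the dual of the
localization of `M*`, since a map from a finitely generated module has a common denominator. The
previous paragraph then applies whenever the localized ring is factorial.
-/

open Module

section PrimitiveFunctional

variable {A N : Type*} [CommRing A] [AddCommGroup N] [Module A N]

/-- A linear functional is primitive if its values have no common divisor other than units. The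
values need not generate the unit ideal. -/
def IsPrimitiveFunctional (φ : Dual A N) : Prop :=
  ∀ a : A, (∀ n, a ∣ φ n) → IsUnit a

theorem IsPrimitiveFunctional.ne_zero [Nontrivial A] {φ : Dual A N}
    (hφ : IsPrimitiveFunctional φ) : φ ≠ 0 := by
  rintro rfl
  exact not_isUnit_zero (hφ 0 fun _ => dvd_rfl)

theorem exists_eq_smul_of_forall_dvd [IsDomain A] {a : A} (ha : a ≠ 0) {φ : Dual A N}
    (h : ∀ n, a ∣ φ n) : ∃ ψ : Dual A N, φ = a • ψ := by
  have hmem (n : N) : φ n ∈ Submodule.span A {a} := Ideal.mem_span_singleton.mpr (h n)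
  let e := LinearEquiv.toSpanNonzeroSingleton A A a ha
  refine ⟨e.symm ∘ₗ φ.codRestrict _ hmem, LinearMap.ext fun n => ?_⟩
  calc φ n = e (e.symm ⟨φ n, hmem n⟩) := by rw [e.apply_symm_apply]
    _ = a * e.symm ⟨φ n, hmem n⟩ := mul_comm _ a

/- Evaluation at a point `n` with `φ n ≠ 0` turns an infinite chain of proper divisions of `φ` into
an infinite chain of proper divisors of `φ n`. -/
theorem exists_isPrimitiveFunctional [IsDomain A] [WfDvdMonoid A] [Nontrivial (Dual A N)] :
    ∃ φ : Dual A N, IsPrimitiveFunctional φ := by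
  obtain ⟨φ₀, hφ₀⟩ := exists_ne (0 : Dual A N)
  obtain ⟨n, hn⟩ := DFunLike.ne_iff.mp hφ₀
  obtain ⟨-, ⟨φ, rfl, hφn⟩, hmin⟩ := (wellFounded_dvdNotUnit (α := A)).has_min
    {x | ∃ φ : Dual A N, φ n = x ∧ x ≠ 0} ⟨_, φ₀, rfl, hn⟩
  refine ⟨φ, fun a hdvd => by_contra fun ha => ?_⟩
  have ha₀ : a ≠ 0 := fun h => hφn (zero_dvd_iff.mp (h ▸ hdvd n))
  obtain ⟨ψ, rfl⟩ := exists_eq_smul_of_forall_dvd ha₀ hdvd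
  have hψn : ψ n ≠ 0 := right_ne_zero_of_mul hφn
  exact hmin (ψ n) ⟨ψ, rfl, hψn⟩ ⟨hψn, a, ha, mul_comm a (ψ n)⟩

theorem IsPrimitiveFunctional.dvd_of_forall_dvd_mul [UniqueFactorizationMonoid A]
    {φ : Dual A N} (hφ : IsPrimitiveFunctional φ) {s t : A} (h : ∀ n, t ∣ s * φ n) : t ∣ s := by
  rcases eq_or_ne s 0 with rfl | hs
  · exact dvd_zero t
  obtain ⟨s', t', c, hrel, rfl, rfl⟩ := UniqueFactorizationMonoid.exists_reduced_factors s hs t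
  have hc : c ≠ 0 := left_ne_zero_of_mul hs
  have ht' : IsUnit t' := hφ t' fun n => by
    have hdvd : t' ∣ s' * φ n :=
      (mul_dvd_mul_iff_left hc).mp (by simpa only [mul_assoc] using h n)
    exact hrel.symm.dvd_of_dvd_mul_left hdvd
  exact mul_dvd_mul_left c ht'.dvd

theorem IsPrimitiveFunctional.exists_smul_eq [UniqueFactorizationMonoid A]
    {φ ψ : Dual A N} (hφ : IsPrimitiveFunctional φ) {s t : A} (ht : t ≠ 0)
    (h : s • φ = t • ψ) : ∃ c : A, c • φ = ψ := by
  obtain ⟨c, rfl⟩ : t ∣ s :=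
    hφ.dvd_of_forall_dvd_mul fun n => ⟨ψ n, LinearMap.congr_fun h n⟩
  exact ⟨c, smul_right_injective _ ht (by simpa only [mul_smul] using h)⟩

end PrimitiveFunctional

theorem exists_smul_eq_smul_of_finrank_eq_one {A D : Type*} [CommRing A] [IsDomain A]
    [AddCommGroup D] [Module A D] [IsTorsionFree A D] (hD : finrank A D = 1) {x : D} (hx : x ≠ 0)
    (y : D) : ∃ s t : A, t ≠ 0 ∧ s • x = t • y := by
  have hdep : ¬ LinearIndependent A ![x, y] := fun h => by
    simpa [rank_eq_one_iff_finrank_eq_one.mpr hD] using h.cardinal_lift_le_rank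
  rw [LinearIndependent.pair_iff] at hdep
  push Not at hdep
  obtain ⟨s, t, hst, hne⟩ := hdep
  refine ⟨-s, t, ?_, by rw [neg_smul, neg_eq_iff_add_eq_zero, hst]⟩
  rintro rfl
  have hs : s = 0 := by simpa [hx] using hst
  exact hne hs rfl

theorem nonempty_dual_linearEquiv_of_finrank_eq_one {A N : Type*} [CommRing A] [IsDomain A]
    [UniqueFactorizationMonoid A] [AddCommGroup N] [Module A N]
    (hN : finrank A (Dual A N) = 1) : Nonempty (Dual A N ≃ₗ[A] A) := by
  have : Nontrivial (Dual A N) := nontrivial_of_finrank_eq_succ hN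
  obtain ⟨φ, hφ⟩ := exists_isPrimitiveFunctional (A := A) (N := N)
  have hinj : Function.Injective (LinearMap.toSpanSingleton A (Dual A N) φ) :=
    LinearMap.ker_eq_bot.mp (LinearMap.ker_toSpanSingleton A hφ.ne_zero)
  have hsurj : Function.Surjective (LinearMap.toSpanSingleton A (Dual A N) φ) := fun ψ => by
    obtain ⟨s, t, ht, hst⟩ := exists_smul_eq_smul_of_finrank_eq_one hN hφ.ne_zero ψ
    exact hφ.exists_smul_eq ht hst
  exact ⟨(LinearEquiv.ofBijective _ ⟨hinj, hsurj⟩).symm⟩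

section Localization

variable {R : Type*} [CommRing R] (S : Submonoid R)
  {M Mₛ N Nₛ : Type*} [AddCommGroup M] [Module R M] [AddCommGroup Mₛ] [Module R Mₛ]
  [AddCommGroup N] [Module R N] [AddCommGroup Nₛ] [Module R Nₛ]

theorem exists_comp_eq_smul_of_injective [Module.Finite R M] {g : N →ₗ[R] Nₛ}
    [IsLocalizedModule S g] (hg : Function.Injective g) (h : M →ₗ[R] Nₛ) :
    ∃ (h' : M →ₗ[R] N) (s : S), g ∘ₗ h' = s • h := by
  obtain ⟨t, ht⟩ := Module.finite_def.mp ‹Module.Finite R M›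
  obtain ⟨s, hs⟩ := IsLocalizedModule.exist_integer_multiples S g t h
  have hrange (m : M) : (s • h) m ∈ LinearMap.range g := by
    have hspan : Submodule.span R t ≤ (LinearMap.range g).comap (s • h) :=
      Submodule.span_le.mpr hs
    exact hspan (ht ▸ Submodule.mem_top)
  let e := LinearEquiv.ofInjective g hg
  refine ⟨e.symm ∘ₗ (s • h).codRestrict _ hrange, s, LinearMap.ext fun m => ?_⟩
  exact congrArg Subtype.val (e.apply_symm_apply ⟨(s • h) m, hrange m⟩)

theorem isLocalizedModule_map_of_injective [Module.Finite R M] (f : M →ₗ[R] Mₛ)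
    [IsLocalizedModule S f] {g : N →ₗ[R] Nₛ} [IsLocalizedModule S g]
    (hg : Function.Injective g) : IsLocalizedModule S (IsLocalizedModule.map S f g) where
  map_units s := by
    have hs : Function.Bijective (algebraMap R (End R Nₛ) s) :=
      (End.isUnit_iff _).mp (IsLocalizedModule.map_units g s)
    let e := LinearEquiv.ofBijective _ hs
    refine (End.isUnit_iff _).mpr ⟨fun h₁ h₂ h => LinearMap.ext fun x =>
      hs.injective (LinearMap.congr_fun h x), fun h => ⟨e.symm ∘ₗ h, LinearMap.ext fun x => ?_⟩⟩
    exact e.apply_symm_apply (h x)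
  surj h := by
    obtain ⟨h', s, hs⟩ := exists_comp_eq_smul_of_injective S hg (h ∘ₗ f)
    refine ⟨⟨h', s⟩, IsLocalizedModule.linearMap_ext S f g ?_⟩
    rw [IsLocalizedModule.map_comp, hs, LinearMap.smul_comp]
  exists_of_eq {h₁ h₂} e := by
    refine Module.Finite.exists_smul_of_comp_eq_of_isLocalizedModule S g h₁ h₂ ?_
    ext x
    simpa using LinearMap.congr_fun e (f x)

end Localization

theorem nonempty_localized_linearEquiv_dual_localized_dual {R A : Type*} [CommRing R] [CommRing A]
    [Algebra R A] {S : Submonoid R} (hS : S ≤ nonZeroDivisors R) [IsLocalization S A]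
    {M Mₛ Dₛ : Type*} [AddCommGroup M] [Module R M] [IsReflexive R M]
    [Module.Finite R (Dual R M)] [AddCommGroup Mₛ] [Module R Mₛ] [Module A Mₛ]
    [IsScalarTower R A Mₛ] (f : M →ₗ[R] Mₛ) [IsLocalizedModule S f]
    [AddCommGroup Dₛ] [Module R Dₛ] [Module A Dₛ] [IsScalarTower R A Dₛ]
    (g : Dual R M →ₗ[R] Dₛ) [IsLocalizedModule S g] : Nonempty (Mₛ ≃ₗ[A] Dual A Dₛ) := by
  have hmap : IsLocalizedModule S (IsLocalizedModule.map S g (Algebra.linearMap R A)) :=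
    isLocalizedModule_map_of_injective S g (IsLocalization.injective A hS)
  have hdual : IsLocalizedModule S
      (IsLocalizedModule.mapExtendScalars S g (Algebra.linearMap R A) A) :=
    IsLocalizedModule.of_linearEquiv _ _ _
  exact ⟨IsLocalizedModule.mapEquiv S f
    (IsLocalizedModule.mapExtendScalars S g (Algebra.linearMap R A) A) A (evalEquiv R M)⟩

theorem reflexive_rank_one_is_invertible_general {R A : Type*} [CommRing R] [CommRing A]
    [IsDomain A] [UniqueFactorizationMonoid A] [Algebra R A] {S : Submonoid R}
    (hS : S ≤ nonZeroDivisors R) [IsLocalization S A] {M Mₛ : Type*} [AddCommGroup M] [Module R M]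
    [IsReflexive R M] [Module.Finite R (Dual R M)] [AddCommGroup Mₛ] [Module R Mₛ] [Module A Mₛ]
    [IsScalarTower R A Mₛ] (f : M →ₗ[R] Mₛ) [IsLocalizedModule S f] (hM : finrank R M = 1) :
    Nonempty (Mₛ ≃ₗ[A] A) := by
  let g : Dual R M →ₗ[R] TensorProduct R A (Dual R M) := TensorProduct.mk R A (Dual R M) 1
  have hg : IsLocalizedModule S g :=
    (isLocalizedModule_iff_isBaseChange S A g).mpr (TensorProduct.isBaseChange R (Dual R M) A)
  obtain ⟨e⟩ := nonempty_localized_linearEquiv_dual_localized_dual (A := A) hS f g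
  have hrank : finrank A (Dual A (TensorProduct R A (Dual R M))) = 1 := by
    rw [← e.finrank_eq, IsLocalization.finrank_eq A S hS, IsLocalizedModule.finrank_eq S f hS, hM]
  obtain ⟨e'⟩ := nonempty_dual_linearEquiv_of_finrank_eq_one hrank
  exact ⟨e.trans e'⟩

theorem reflexive_rank_one_is_invertible
    (R : Type*) [CommRing R] [IsDomain R] [IsNoetherianRing R]
    (hfact : ∀ (P : Ideal R) (_ : P.IsPrime),
      UniqueFactorizationMonoid (Localization.AtPrime P))
    (M : Type*) [AddCommGroup M] [Module R M] [Module.Finite R M]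
    [Module.IsReflexive R M]
    (hrank : Module.rank (FractionRing R)
      (TensorProduct R (FractionRing R) M) = 1) :
    ∀ (P : Ideal R) (_ : P.IsPrime),
      Nonempty ((LocalizedModule P.primeCompl M) ≃ₗ[Localization.AtPrime P]
        Localization.AtPrime P) := by
  intro P hP
  have := hfact P hP
  have hM : finrank R M = 1 :=
    (TensorProduct.isBaseChange R M (FractionRing R)).finrank_eq.symm.trans
      (rank_eq_one_iff_finrank_eq_one.mp hrank)
  exact reflexive_rank_one_is_invertible_general P.primeCompl_le_nonZeroDivisors
    (LocalizedModule.mkLinearMap P.primeCompl M) hM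
end

section
/- Let S and X be locally noetherian schemes, U a schematically dense open of S, f : X → S a morphism with reduced fibers, W an S-dense open of X containing X_U, and M a coherent, S-flat O_X-module such that for every s ∈ S the associated points of M ⊗ k(s) are contained in the associated points of X_s. Then depth_Z(M) ≥ 2 for Z := X − W; consequently M is Z-closed, i.e. M → j_*(M|_W) is an isomorphism, where j : W → X is the inclusion. -/
/-!
STATEMENT 4: Let `S`, `X` be locally noetherian schemes, `U` a schematically dense open of
`S`, `f : X → S` a morphism with reduced fibers, `W` an `S`-dense open of `X` containing
`X_U`, and `M` a coherent `S`-flat `O_X`-module such that for every `s ∈ S` the associated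
points of `M ⊗ k(s)` are contained in the associated points of `X_s`.  Then
`depth_Z(M) ≥ 2` for `Z := X − W`; consequently `M` is `Z`-closed.

Local formulation at a point `z ∈ Z` lying over `s := f(z)`.  Write `R = O_{S,s}`,
`A = O_{X,z}` (noetherian local rings), `I = 𝔪_R·A` so that the fiber `X_s` has local ring
`A⧸I` at `z` and `(M ⊗ k(s))_z = M⧸I·M`.  The hypotheses translate as follows:
* `s ∉ U` with `U` schematically dense means `s` is not an associated point of `S`, i.e.
  `𝔪_R` is not an associated prime of `R` (equivalently `depth O_{S,s} ≥ 1`);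
* the fibers of `f` are reduced: `A⧸I` is reduced;
* `z ∈ Z = X − W` with `W` an `S`-dense open means that `z` is not a generic point of its
  fiber, i.e. `𝔪_A` is not a minimal prime over `I`;
* the associated points of `M ⊗ k(s)` are among those of `X_s`: every associated prime of
  the `A`-module `M⧸I·M` is an associated prime of `A⧸I`.
The conclusion `depth_Z(M) ≥ 2` means that at every such point `z` the stalk `M_z` admits
a regular sequence of length `2` in the maximal ideal (EGA IV 5.10.5: this is equivalent
to `M` being `Z`-closed, i.e. `M → j_*(M|_W)` being an isomorphism).
-/

open IsLocalRing

open TensorProduct RingTheory.Sequence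

/-!
Let `m` be the maximal ideal of `R`. An associated prime of the reduced closed fiber `A ⧸ mA` is
minimal, so the maximal ideal of `A` is not associated to `M ⧸ mM` and contains an `M ⧸ mM`-regular
element `b`. Flatness propagates the regularity of `b` to `M ⊗ Q` along the exact sequences
`0 → mQ → Q → Q ⧸ mQ → 0`, first for `Q` killed by a power of `m`, then for every finite `Q` by
Krull's intersection theorem. If `r ∈ m` is `R`-regular, flatness makes it `M`-regular, and `b` is
regular on `M ⧸ rM = M ⊗ (R ⧸ rR)`.
-/

theorem exists_mem_isSMulRegular_of_not_isAssociatedPrime {A N : Type*} [CommRing A]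
    [IsNoetherianRing A] [AddCommGroup N] [Module A N] [Module.Finite A N] {m : Ideal A}
    [m.IsMaximal] (h : ¬ IsAssociatedPrime m N) : ∃ b ∈ m, IsSMulRegular N b := by
  have : IsSimpleModule A (A ⧸ m) := isSimpleModule_iff_isCoatom.mpr Ideal.IsMaximal.out
  have hsubsingleton : Subsingleton (A ⧸ m →ₗ[A] N) := by
    refine subsingleton_of_forall_eq 0 fun f ↦ f.injective_or_eq_zero.resolve_left fun hf ↦ h ?_
    exact (isAssociatedPrime_iff_exists_injective_linearMap m N).mpr ⟨inferInstance, f, hf⟩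
  simpa only [Ideal.annihilator_quotient] using
    IsSMulRegular.subsingleton_linearMap_iff.mp hsubsingleton

theorem mem_minimalPrimes_of_isAssociatedPrime_quotient {A : Type*} [CommRing A] {I p : Ideal A}
    (hI : I.IsRadical) (hp : IsAssociatedPrime p (A ⧸ I)) : p ∈ I.minimalPrimes := by
  obtain ⟨hprime, y, hy⟩ := hp
  obtain ⟨x, rfl⟩ := Ideal.Quotient.mk_surjective y
  have mem_p (c : A) : c ∈ p ↔ ∃ n, c ^ n * x ∈ I := by
    rw [hy, Ideal.mem_radical_iff]
    simp only [Submodule.mem_colon_singleton, Submodule.mem_bot]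
    refine exists_congr fun n ↦ ?_
    rw [← Ideal.Quotient.eq_zero_iff_mem, map_mul]
    rfl
  have hx : x ∉ p := fun hxp ↦ by
    obtain ⟨n, hn⟩ := (mem_p x).mp hxp
    have hxI : x ∈ I := hI ⟨n + 1, by rwa [pow_succ]⟩
    exact hprime.ne_top <| p.eq_top_iff_one.mpr <| (mem_p 1).mpr ⟨0, by simpa using hxI⟩
  refine ⟨⟨hprime, fun c hc ↦ (mem_p c).mpr ⟨1, ?_⟩⟩, fun q ⟨hq, hIq⟩ hqp c hc ↦ ?_⟩
  · simpa only [pow_one] using I.mul_mem_right x hc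
  · obtain ⟨n, hn⟩ := (mem_p c).mp hc
    exact hq.mem_of_pow_mem n <| (hq.mem_or_mem (hIq hn)).resolve_right fun hxq ↦ hx (hqp hxq)

theorem le_annihilator_quotient_smul_top {R : Type*} (Q : Type*) [CommRing R] [AddCommGroup Q]
    [Module R Q] (J : Ideal R) : J ≤ Module.annihilator R (Q ⧸ (J • ⊤ : Submodule R Q)) := by
  rw [Submodule.annihilator_quotient]
  exact fun a ha ↦ Submodule.mem_colon.mpr fun q _ ↦
    Submodule.smul_mem_smul ha Submodule.mem_top

theorem ker_lTensor_mkQ_smul_top_le {R M Q : Type*} [CommRing R] [AddCommGroup M] [Module R M]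
    [AddCommGroup Q] [Module R Q] (J : Ideal R) :
    ((J • ⊤ : Submodule R Q).mkQ.lTensor M).ker ≤ J • ⊤ := by
  rw [lTensor_mkQ, LinearMap.range_eq_map, ← TensorProduct.span_tmul_eq_top, Submodule.map_span_le]
  rintro _ ⟨x, ⟨q, hq⟩, rfl⟩
  have := Submodule.mem_map_of_mem (f := TensorProduct.mk R M Q x) hq
  rw [Submodule.map_smul''] at this
  exact Submodule.smul_mono le_rfl le_top this

section TensorProduct

variable {R A M Q : Type*} [CommRing R] [CommRing A] [Algebra R A] [AddCommGroup M] [Module A M]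
  [Module R M] [IsScalarTower R A M] [AddCommGroup Q] [Module R Q] {m : Ideal R} {b : A}

-- `Q` is an `R ⧸ m`-vector space, so `M ⊗[R] Q` is a direct sum of copies of `M ⊗[R] (R ⧸ m)`.
theorem isSMulRegular_tensorProduct_of_le_annihilator [m.IsMaximal]
    (hb : IsSMulRegular (M ⊗[R] (R ⧸ m)) b) (hQ : m ≤ Module.annihilator R Q) :
    IsSMulRegular (M ⊗[R] Q) b := by
  classical
  let := Ideal.Quotient.field m
  let : Module (R ⧸ m) Q :=
    Module.IsTorsionBySet.module fun x a ↦ Module.mem_annihilator.mp (hQ a.2) x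
  have : IsScalarTower R (R ⧸ m) Q := Module.IsTorsionBySet.isScalarTower _
  let coordinates := (Module.Basis.ofVectorSpace (R ⧸ m) Q).repr.restrictScalars R
  rw [((AlgebraTensorModule.congr (.refl A M) coordinates).trans
    (finsuppRight R A M (R ⧸ m) _)).isSMulRegular_congr]
  exact hb.finsupp

theorem isSMulRegular_tensorProduct_of_pow_le_annihilator [Module.Flat R M] [m.IsMaximal]
    (hb : IsSMulRegular (M ⊗[R] (R ⧸ m)) b) {n : ℕ} (hQ : m ^ n ≤ Module.annihilator R Q) :
    IsSMulRegular (M ⊗[R] Q) b := by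
  induction n generalizing Q with
  | zero =>
    have : Subsingleton Q := by
      rw [← Module.annihilator_eq_top_iff (R := R)]
      simpa using hQ
    exact fun x y _ ↦ Subsingleton.elim x y
  | succ n ih =>
    let mQ : Submodule R Q := m • ⊤
    have hsub : m ^ n ≤ Module.annihilator R mQ := by
      rw [← Submodule.annihilator_top, Submodule.le_annihilator_iff] at hQ
      refine Submodule.le_annihilator_iff.mpr ?_
      rwa [← mul_smul, ← pow_succ]
    have hquot : m ≤ Module.annihilator R (Q ⧸ mQ) :=
      le_annihilator_quotient_smul_top Q m
    have hinj : Function.Injective (AlgebraTensorModule.lTensor A M mQ.subtype) :=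
      Module.Flat.lTensor_preserves_injective_linearMap _ mQ.injective_subtype
    have hexact : Function.Exact (AlgebraTensorModule.lTensor A M mQ.subtype)
        (AlgebraTensorModule.lTensor A M mQ.mkQ) :=
      lTensor_exact M (LinearMap.exact_subtype_mkQ mQ) mQ.mkQ_surjective
    exact isSMulRegular_of_range_eq_ker hinj (LinearMap.exact_iff.mp hexact).symm (ih hsub)
      (isSMulRegular_tensorProduct_of_le_annihilator hb hquot)

theorem isSMulRegular_tensorProduct_of_flat [IsNoetherianRing A] [Module.Finite A M]
    [Module.Flat R M] [Module.Finite R Q] [m.IsMaximal]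
    (hm : m.map (algebraMap R A) ≤ Ideal.jacobson ⊥)
    (hb : IsSMulRegular (M ⊗[R] (R ⧸ m)) b) :
    IsSMulRegular (M ⊗[R] Q) b := by
  have : Module.Finite A (M ⊗[R] Q) :=
    .equiv (AlgebraTensorModule.cancelBaseChange R A A M Q)
  have hausdorff : IsHausdorff m (M ⊗[R] Q) :=
    IsHausdorff.map_algebraMap_iff.mp <| IsHausdorff.of_le_jacobson _ (M ⊗[R] Q) hm
  refine isSMulRegular_iff_right_eq_zero_of_smul.mpr fun x hx ↦ hausdorff.haus x fun n ↦ ?_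
  have hQ : m ^ n ≤ Module.annihilator R (Q ⧸ (m ^ n • ⊤ : Submodule R Q)) :=
    le_annihilator_quotient_smul_top Q _
  rw [SModEq.zero]
  refine ker_lTensor_mkQ_smul_top_le _ ?_
  refine (isSMulRegular_tensorProduct_of_pow_le_annihilator hb hQ).right_eq_zero_of_smul ?_
  rw [← AlgebraTensorModule.coe_lTensor (A := A), ← map_smul, hx, map_zero]

/-- Reduction modulo `K`, as the base change `M ⊗[R] (R ⧸ K)` and as the quotient of `M` by the
extension of `K` to `A`: the isomorphism is `A`-linear, so that regularity of elements of `A` can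
be transferred between the two forms of the fiber. -/
noncomputable def tensorQuotEquivQuotMapSMul (K : Ideal R) :
    M ⊗[R] (R ⧸ K) ≃ₗ[A] M ⧸ (K.map (algebraMap R A) • ⊤ : Submodule A M) :=
  (AlgebraTensorModule.cancelBaseChange R A A M (R ⧸ K)).symm ≪≫ₗ
    (Algebra.TensorProduct.quotIdealMapEquivTensorQuot A K).symm.toLinearEquiv.lTensor M ≪≫ₗ
    tensorQuotEquivQuotSMul M (K.map (algebraMap R A))

theorem isWeaklyRegular_map_append_singleton_of_flat [IsNoetherianRing A] [Module.Finite A M]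
    [Module.Flat R M] [m.IsMaximal] (hm : m.map (algebraMap R A) ≤ Ideal.jacobson ⊥)
    {rs : List R} (hrs : IsWeaklyRegular R rs)
    (hb : IsSMulRegular (M ⧸ (m.map (algebraMap R A) • ⊤ : Submodule A M)) b) :
    IsWeaklyRegular M (rs.map (algebraMap R A) ++ [b]) := by
  rw [isWeaklyRegular_append_iff, isWeaklyRegular_singleton_iff, isWeaklyRegular_map_algebraMap_iff,
    ← Ideal.map_ofList, ← (tensorQuotEquivQuotMapSMul _).isSMulRegular_congr]
  exact ⟨((TensorProduct.rid R M).isWeaklyRegular_congr rs).mp (hrs.isWeaklyRegular_lTensor),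
    isSMulRegular_tensorProduct_of_flat hm
      ((tensorQuotEquivQuotMapSMul m).isSMulRegular_congr b |>.mpr hb)⟩

end TensorProduct

theorem depth_ge_two_on_complement_of_S_dense_open
    (R A : Type*) [CommRing R] [IsLocalRing R] [IsNoetherianRing R]
    [CommRing A] [IsLocalRing A] [IsNoetherianRing A]
    [Algebra R A] [IsLocalHom (algebraMap R A)]
    (M : Type*) [AddCommGroup M] [Module A M] [Module R M] [IsScalarTower R A M]
    [Module.Finite A M] [Module.Flat R M]
    (I : Ideal A) (hI : I = (maximalIdeal R).map (algebraMap R A))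
    -- `s = f(z)` is not an associated point of `S` (it lies outside the schematically
    -- dense open `U`)
    (hs : ¬ IsAssociatedPrime (maximalIdeal R) R)
    -- the fiber of `f` through `z` is reduced
    (hred : IsReduced (A ⧸ I))
    -- `z` is not a generic point of its fiber (it lies outside the `S`-dense open `W`)
    (hz : maximalIdeal A ∉ I.minimalPrimes)
    -- the associated points of `M ⊗ k(s)` are contained in those of `X_s`
    (hAss : ∀ p : Ideal A, IsAssociatedPrime p (M ⧸ (I • (⊤ : Submodule A M))) →
      IsAssociatedPrime p (A ⧸ I)) :
    ∃ a b : A, a ∈ maximalIdeal A ∧ b ∈ maximalIdeal A ∧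
      RingTheory.Sequence.IsWeaklyRegular M [a, b] := by
  have hfiber : ¬ IsAssociatedPrime (maximalIdeal A) (M ⧸ (I • (⊤ : Submodule A M))) := fun h ↦
    hz <| mem_minimalPrimes_of_isAssociatedPrime_quotient
      (I.isRadical_iff_quotient_reduced.mpr hred) (hAss _ h)
  subst hI
  have hle : (maximalIdeal R).map (algebraMap R A) ≤ maximalIdeal A :=
    ((local_hom_TFAE (algebraMap R A)).out 0 2).mp ‹_›
  obtain ⟨r, hr, hrR⟩ := exists_mem_isSMulRegular_of_not_isAssociatedPrime hs
  obtain ⟨b, hb, hbM⟩ := exists_mem_isSMulRegular_of_not_isAssociatedPrime hfiber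
  exact ⟨algebraMap R A r, b, hle (Ideal.mem_map_of_mem _ hr), hb,
    isWeaklyRegular_map_append_singleton_of_flat (hle.trans (maximalIdeal_le_jacobson _))
      ((isWeaklyRegular_singleton_iff R r).mpr hrR) hbM⟩
end
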